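/- arXiv:2402.02312 — 4 statements merged into one kernel-verified Lean document; each statement's English description precedes it below -/
import Mathlib

section
/- Let V be a finite-dimensional vector space over ℚ and let A, B ∈ GL(V) be commuting linear maps each of order a power of the prime p. Then for every m ≥ 1, tr(A · B^(p^(m-1))) ≡ tr(A) (mod p^m), where the traces are rational integers (they are algebraic integers fixed by the Galois action) and the congruence is in ℤ. -/
/-!
Both traces can be computed on the simple subquotients of `V` as a module over the commutative
algebra `ℚ[A, B]`. Such a subquotient is a number field `K` on which `A` acts as an algebraic
integer `x` and `B` as a root of unity `y` of order `1` or `p ^ (k + 1)`; in the first case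
`x * y ^ p ^ n - x = 0`. In the second, transitivity of the trace reduces the divisibility of
`Tr (x * (y ^ p ^ n - 1))` by `p ^ (n + 1)` to the cyclotomic field `ℚ(y)`, whose ring of
integers `ℤ[y]` is spanned by powers of `y`. So it is enough to know the traces of roots of unity
of `p`-power order: in `ℚ(y)` the trace of `w` is `p ^ (k + 1) * [w = 1] - p ^ k * [w ^ p = 1]`.
-/

open Polynomial

theorem nextCoeff_X_pow_sub_one {R : Type*} [Ring R] [Nontrivial R] (n : ℕ) :
    (X ^ n - 1 : R[X]).nextCoeff = if n = 1 then -1 else 0 := by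
  rw [← C_1, nextCoeff, natDegree_X_pow_sub_C, coeff_sub, coeff_X_pow, coeff_C]
  grind

theorem nextCoeff_cyclotomic {R : Type*} [CommRing R] (n : ℕ) :
    (cyclotomic n R).nextCoeff = -(ArithmeticFunction.moebius n : R) := by
  nontriviality R
  obtain rfl | hn := n.eq_zero_or_pos
  · rw [cyclotomic_zero, ← C_1, nextCoeff_C_eq_zero, ArithmeticFunction.map_zero, Int.cast_zero,
      neg_zero]
  have hsum : ∀ n > 0, ∑ d ∈ n.divisors, (cyclotomic d R).nextCoeff =
      if n = 1 then -1 else 0 := fun n hn => by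
    rw [← Monic.nextCoeff_prod _ _ fun d _ => cyclotomic.monic d R,
      prod_cyclotomic_eq_X_pow_sub_one hn, nextCoeff_X_pow_sub_one]
  rw [← ArithmeticFunction.sum_eq_iff_sum_mul_moebius_eq.mp hsum n hn, Finset.sum_eq_single (n, 1)]
  · rw [if_pos rfl, mul_neg_one]
  · rintro ⟨d, e⟩ hde hne
    rw [if_neg, mul_zero]
    rintro rfl
    exact hne (by rw [← (Nat.mem_divisorsAntidiagonal.mp hde).1, mul_one])
  · exact fun h => absurd (Nat.mem_divisorsAntidiagonal.mpr ⟨mul_one n, hn.ne'⟩) h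

open IntermediateField in
theorem totient_mul_trace_of_isPrimitiveRoot {K : Type*} [Field K] [Algebra ℚ K]
    [FiniteDimensional ℚ K] {w : K} {n : ℕ} (hw : IsPrimitiveRoot w n) :
    n.totient * Algebra.trace ℚ K w = ArithmeticFunction.moebius n * Module.finrank ℚ K := by
  obtain rfl | hn := n.eq_zero_or_pos
  · rw [Nat.totient_zero, Nat.cast_zero, zero_mul, ArithmeticFunction.map_zero, Int.cast_zero,
      zero_mul]
  have : NeZero (n : ℚ) := ⟨Nat.cast_ne_zero.mpr hn.ne'⟩
  have hmin : minpoly ℚ w = cyclotomic n ℚ :=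
    (hw.minpoly_eq_cyclotomic_of_irreducible (cyclotomic.irreducible_rat hn)).symm
  rw [trace_eq_finrank_mul_minpoly_nextCoeff, ← Module.finrank_mul_finrank ℚ ℚ⟮w⟯ K,
    adjoin.finrank (IsIntegral.of_finite ℚ w), hmin, natDegree_cyclotomic, nextCoeff_cyclotomic]
  push_cast
  ring

section Cyclotomic

variable {p k n : ℕ} [Fact p.Prime] {L : Type*} [Field L] [CharZero L]
  [IsCyclotomicExtension {p ^ (k + 1)} ℚ L]

theorem finrank_cyclotomic_prime_pow :
    (Module.finrank ℚ L : ℚ) = p ^ k * (p - 1) := by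
  have hp : p.Prime := Fact.out
  rw [IsCyclotomicExtension.finrank L (cyclotomic.irreducible_rat (pow_pos hp.pos (k + 1))),
    Nat.totient_prime_pow_succ hp, Nat.cast_mul, Nat.cast_pow, Nat.cast_pred hp.pos]

theorem trace_of_isPrimitiveRoot_prime_pow {w : L} {s : ℕ}
    (hw : IsPrimitiveRoot w (p ^ s)) :
    Algebra.trace ℚ L w =
      (if s = 0 then (p : ℚ) ^ (k + 1) else 0) - if s ≤ 1 then (p : ℚ) ^ k else 0 := by
  have hp : p.Prime := Fact.out
  have : FiniteDimensional ℚ L := IsCyclotomicExtension.finiteDimensional {p ^ (k + 1)} ℚ L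
  have htrace := totient_mul_trace_of_isPrimitiveRoot hw
  rw [finrank_cyclotomic_prime_pow (p := p) (k := k)] at htrace
  match s with
  | 0 =>
    rw [pow_zero, Nat.totient_one, Nat.cast_one, one_mul, ArithmeticFunction.moebius_apply_one,
      Int.cast_one, one_mul] at htrace
    rw [htrace, if_pos rfl, if_pos zero_le_one]
    ring
  | 1 =>
    have hp1 : (p : ℚ) - 1 ≠ 0 := sub_ne_zero.mpr (mod_cast hp.ne_one)
    rw [pow_one, Nat.totient_prime hp, Nat.cast_pred hp.pos,
      ArithmeticFunction.moebius_apply_prime hp] at htrace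
    rw [if_neg one_ne_zero, if_pos le_rfl, zero_sub]
    apply mul_left_cancel₀ hp1
    rw [htrace]
    push_cast
    ring
  | s + 2 =>
    rw [ArithmeticFunction.moebius_apply_prime_pow hp (by lia), if_neg (by lia), Int.cast_zero,
      zero_mul, mul_eq_zero, Nat.cast_eq_zero, Nat.totient_eq_zero] at htrace
    rw [if_neg (by lia), if_neg (by lia), sub_zero]
    exact htrace.resolve_left (pow_ne_zero _ hp.ne_zero)

open Classical in
theorem trace_of_pow_prime_pow_eq_one {w : L} (hw : w ^ p ^ (k + 1) = 1) :
    Algebra.trace ℚ L w =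
      (if w = 1 then (p : ℚ) ^ (k + 1) else 0) - if w ^ p = 1 then (p : ℚ) ^ k else 0 := by
  have hp : p.Prime := Fact.out
  obtain ⟨s, -, hs⟩ := (Nat.dvd_prime_pow hp).mp (orderOf_dvd_of_pow_eq_one hw)
  have hprim : IsPrimitiveRoot w (p ^ s) := hs ▸ IsPrimitiveRoot.orderOf w
  have eq_one_iff : w = 1 ↔ s = 0 := by
    rw [← orderOf_eq_one_iff, hs, Nat.pow_eq_one, or_iff_right hp.ne_one]
  have pow_eq_one_iff : w ^ p = 1 ↔ s ≤ 1 := by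
    rw [hprim.pow_eq_one_iff_dvd, ← Nat.pow_dvd_pow_iff_le_right hp.one_lt, pow_one]
  simp only [eq_one_iff, pow_eq_one_iff]
  exact trace_of_isPrimitiveRoot_prime_pow hprim

theorem trace_rootOfUnity_mul_pow_sub_one_mem_zmultiples {w y : L} (hw : w ^ p ^ (k + 1) = 1)
    (hy : y ^ p ^ (k + 1) = 1) :
    Algebra.trace ℚ L (w * (y ^ p ^ n - 1)) ∈ AddSubgroup.zmultiples ((p : ℚ) ^ (n + 1)) := by
  classical
  have ite_pow_mem (P : Prop) [Decidable P] {j : ℕ} (hj : n + 1 ≤ j) :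
      (if P then (p : ℚ) ^ j else 0) ∈ AddSubgroup.zmultiples ((p : ℚ) ^ (n + 1)) := by
    split_ifs
    · refine ⟨(p : ℤ) ^ (j - (n + 1)), ?_⟩
      simp only [zsmul_eq_mul, Int.cast_pow, Int.cast_natCast, ← pow_add, Nat.sub_add_cancel hj]
    · exact zero_mem _
  have hyn : (y ^ p ^ n) ^ p ^ (k + 1) = 1 := by rw [pow_right_comm, hy, one_pow]
  rw [mul_sub_one, map_sub, trace_of_pow_prime_pow_eq_one hw,
    trace_of_pow_prime_pow_eq_one (w := w * y ^ p ^ n) (by rw [mul_pow, hw, hyn, one_mul])]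
  obtain hlt | rfl | hgt := lt_trichotomy n k
  · exact sub_mem (sub_mem (ite_pow_mem _ (by lia)) (ite_pow_mem _ hlt))
      (sub_mem (ite_pow_mem _ (by lia)) (ite_pow_mem _ hlt))
  · have hpow : (w * y ^ p ^ n) ^ p = w ^ p := by rw [mul_pow, ← pow_mul, ← pow_succ, hy, mul_one]
    rw [hpow, sub_sub_sub_cancel_right]
    exact sub_mem (ite_pow_mem _ le_rfl) (ite_pow_mem _ le_rfl)
  · have hone : y ^ p ^ n = 1 :=
      orderOf_dvd_iff_pow_eq_one.mp ((orderOf_dvd_of_pow_eq_one hy).trans (pow_dvd_pow p hgt))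
    rw [hone, mul_one, sub_self]
    exact zero_mem _

theorem trace_mul_pow_sub_one_mem_zmultiples_of_isCyclotomicExtension {t y : L}
    (ht : IsIntegral ℤ t) (hy : y ^ p ^ (k + 1) = 1) :
    Algebra.trace ℚ L (t * (y ^ p ^ n - 1)) ∈ AddSubgroup.zmultiples ((p : ℚ) ^ (n + 1)) := by
  have hζ := IsCyclotomicExtension.zeta_spec (p ^ (k + 1)) ℚ L
  have hclosure := IsCyclotomicExtension.Rat.isIntegralClosure_adjoin_singleton_of_prime_pow hζ
  obtain ⟨⟨t, htadj⟩, rfl⟩ := hclosure.isIntegral_iff.mp ht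
  have hspan := htadj
  rw [← Subalgebra.mem_toSubmodule, Algebra.adjoin_eq_span] at hspan
  change Algebra.trace ℚ L (t * _) ∈ _
  clear ht htadj
  induction hspan using Submodule.span_induction with
  | mem w hw =>
    obtain ⟨i, rfl⟩ := Submonoid.mem_closure_singleton.mp hw
    exact trace_rootOfUnity_mul_pow_sub_one_mem_zmultiples
      (by rw [pow_right_comm, hζ.pow_eq_one, one_pow]) hy
  | zero => rw [zero_mul, map_zero]; exact zero_mem _
  | add t u _ _ ht hu => rw [add_mul, map_add]; exact add_mem ht hu
  | smul c t _ ht => rw [smul_mul_assoc, map_zsmul]; exact zsmul_mem ht c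

end Cyclotomic

open IntermediateField in
theorem trace_mul_pow_sub_one_mem_zmultiples_of_isIntegral {K : Type*} [Field K] [Algebra ℚ K]
    [FiniteDimensional ℚ K] {p : ℕ} (hp : p.Prime) (n : ℕ) {x y : K} (hx : IsIntegral ℤ x) {b : ℕ}
    (hy : y ^ p ^ b = 1) :
    Algebra.trace ℚ K (x * (y ^ p ^ n - 1)) ∈ AddSubgroup.zmultiples ((p : ℚ) ^ (n + 1)) := by
  have := Fact.mk hp
  have : CharZero K := algebraRat.charZero K
  -- Lemmas about `ℚ⟮y⟯` as a number field assume the canonical `ℚ`-algebra structure.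
  obtain rfl : ‹Algebra ℚ K› = DivisionRing.toRatAlgebra := Subsingleton.elim _ _
  obtain ⟨s, -, hs⟩ := (Nat.dvd_prime_pow hp).mp (orderOf_dvd_of_pow_eq_one hy)
  obtain _ | k := s
  · rw [orderOf_eq_one_iff.mp hs, one_pow, sub_self, mul_zero, map_zero]
    exact zero_mem _
  have hprim : IsPrimitiveRoot y (p ^ (k + 1)) := hs ▸ IsPrimitiveRoot.orderOf y
  have : IsCyclotomicExtension {p ^ (k + 1)} ℚ ℚ⟮y⟯ :=
    hprim.intermediateField_adjoin_isCyclotomicExtension ℚ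
  let g : ℚ⟮y⟯ := AdjoinSimple.gen ℚ y
  have hg : g ^ p ^ (k + 1) = 1 := Subtype.ext hprim.pow_eq_one
  have hxg : x * (y ^ p ^ n - 1) = (g ^ p ^ n - 1) • x := mul_comm ..
  rw [hxg, ← Algebra.trace_trace (S := ℚ⟮y⟯), map_smul, smul_eq_mul, mul_comm]
  exact trace_mul_pow_sub_one_mem_zmultiples_of_isCyclotomicExtension
    (Algebra.isIntegral_trace hx) hg

theorem trace_eq_trace_restrict_add_trace_mapQ {F V : Type*} [CommRing F] [AddCommGroup V]
    [Module F V] [Module.Finite F V] (N : Submodule F V) [Module.Free F N] [Module.Finite F N]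
    [Module.Free F (V ⧸ N)] (f : Module.End F V) (hf : N ≤ N.comap f) :
    LinearMap.trace F V f =
      LinearMap.trace F N (f.restrict hf) + LinearMap.trace F (V ⧸ N) (N.mapQ N f hf) := by
  classical
  let bN := Module.Free.chooseBasis F N
  let bQ := Module.Free.chooseBasis F (V ⧸ N)
  rw [LinearMap.trace_eq_matrix_trace F bN, LinearMap.trace_eq_matrix_trace F bQ,
    LinearMap.trace_eq_matrix_trace F (bN.sumQuot bQ)]
  simp only [Matrix.trace, Fintype.sum_sum_type, Matrix.diag_apply, LinearMap.toMatrix_apply,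
    Module.Basis.sumQuot_inl, Module.Basis.sumQuot_repr_inr]
  congr! 3 with i _ j
  · exact Module.Basis.sumQuot_repr_inl_of_mem bN bQ _ (hf (bN i).2) i
  · rw [← Module.Basis.sumQuot_inr bN bQ j, Submodule.mapQ_apply, Submodule.mkQ_apply]

theorem trace_lsmul_eq_algebraTrace_of_linearEquiv {F R K V : Type*} [CommRing F] [CommRing R]
    [Algebra F R] [CommRing K] [Algebra F K] [Algebra R K] [IsScalarTower F R K]
    [AddCommGroup V] [Module F V] [Module R V] [IsScalarTower F R V] (e : V ≃ₗ[R] K) (r : R) :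
    LinearMap.trace F V (Algebra.lsmul F F V r) = Algebra.trace F K (algebraMap R K r) := by
  rw [← LinearMap.trace_conj' _ (e.restrictScalars F), Algebra.trace_apply]
  congr 1
  ext v
  simp [Algebra.smul_def]

theorem trace_lsmul_mem_of_forall_isMaximal {F R : Type*} [Field F] [CommRing R] [Algebra F R]
    {r : R} {S : AddSubmonoid F}
    (hr : ∀ I : Ideal R, I.IsMaximal → FiniteDimensional F (R ⧸ I) →
      Algebra.trace F (R ⧸ I) (Ideal.Quotient.mk I r) ∈ S)
    (V : Type*) [AddCommGroup V] [hF : Module F V] [Module R V] [IsScalarTower F R V]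
    [FiniteDimensional F V] :
    LinearMap.trace F V (Algebra.lsmul F F V r) ∈ S := by
  have hV : IsFiniteLength R V := isFiniteLength_iff_isNoetherian_isArtinian.mpr
    ⟨isNoetherian_of_tower F inferInstance, isArtinian_of_tower F inferInstance⟩
  induction hV generalizing hF with
  | @of_subsingleton V =>
    rw [Subsingleton.elim (Algebra.lsmul F F V r) 0, map_zero]
    exact zero_mem S
  | @of_simple_quotient V _ _ N hsimple _ ih =>
    have : FiniteDimensional F N := inferInstanceAs (FiniteDimensional F (N.restrictScalars F))
    have : FiniteDimensional F (V ⧸ N) :=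
      inferInstanceAs (FiniteDimensional F (V ⧸ N.restrictScalars F))
    obtain ⟨I, hI, ⟨e⟩⟩ := isSimpleModule_iff_quot_maximal.mp hsimple
    have hsplit : LinearMap.trace F V (Algebra.lsmul F F V r) =
        LinearMap.trace F N (Algebra.lsmul F F N r) +
          LinearMap.trace F (V ⧸ N) (Algebra.lsmul F F (V ⧸ N) r) :=
      trace_eq_trace_restrict_add_trace_mapQ (N.restrictScalars F) (Algebra.lsmul F F V r)
        fun _ hv => N.smul_mem r hv
    rw [hsplit, trace_lsmul_eq_algebraTrace_of_linearEquiv e]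
    exact add_mem ih (hr I hI (Module.Finite.equiv (e.restrictScalars F)))

open scoped IsMulCommutative

theorem isIntegral_trace_end {R F V : Type*} [CommRing R] [Field F] [Algebra R F]
    [AddCommGroup V] [Module F V] [FiniteDimensional F V] [Module R V] [IsScalarTower R F V]
    {f : Module.End F V} (hf : IsIntegral R f) : IsIntegral R (LinearMap.trace F V f) := by
  let x : Algebra.adjoin F {f} := ⟨f, Algebra.self_mem_adjoin_singleton F f⟩
  have hx : IsIntegral R x :=
    (isIntegral_algHom_iff ((Algebra.adjoin F {f}).val.restrictScalars R)
      Subtype.val_injective).mp hf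
  refine trace_lsmul_mem_of_forall_isMaximal (r := x)
    (S := (integralClosure R F).toSubsemiring.toAddSubmonoid) (fun I hI _ => ?_) V
  let _ := Ideal.Quotient.field I
  exact Algebra.isIntegral_trace (hx.map (Ideal.Quotient.mkₐ R I))

theorem trace_end_mul_pow_sub_one_mem_zmultiples {V : Type*} [AddCommGroup V] [Module ℚ V]
    [FiniteDimensional ℚ V] {A B : Module.End ℚ V} (hAB : Commute A B) (hA : IsIntegral ℤ A)
    {p : ℕ} (hp : p.Prime) (n : ℕ) {b : ℕ} (hB : B ^ p ^ b = 1) :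
    LinearMap.trace ℚ V (A * (B ^ p ^ n - 1)) ∈ AddSubgroup.zmultiples ((p : ℚ) ^ (n + 1)) := by
  let R := Algebra.adjoin ℚ {A, B}
  have : IsMulCommutative R := Algebra.isMulCommutative_adjoin ℚ (by
    rintro _ (rfl | rfl) _ (rfl | rfl)
    exacts [rfl, hAB, hAB.symm, rfl])
  let x : R := ⟨A, Algebra.subset_adjoin (Set.mem_insert A {B})⟩
  let y : R := ⟨B, Algebra.subset_adjoin (Set.mem_insert_of_mem A rfl)⟩
  have hx : IsIntegral ℤ x :=
    (isIntegral_algHom_iff (R.val.restrictScalars ℤ) Subtype.val_injective).mp hA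
  have hy : y ^ p ^ b = 1 := Subtype.ext hB
  refine trace_lsmul_mem_of_forall_isMaximal (r := x * (y ^ p ^ n - 1))
    (S := (AddSubgroup.zmultiples ((p : ℚ) ^ (n + 1))).toAddSubmonoid) (fun I hI _ => ?_) V
  let _ := Ideal.Quotient.field I
  have hyI : Ideal.Quotient.mk I y ^ p ^ b = 1 := by rw [← map_pow, hy, map_one]
  rw [map_mul, map_sub, map_pow, map_one]
  exact trace_mul_pow_sub_one_mem_zmultiples_of_isIntegral hp n
    (hx.map (Ideal.Quotient.mkₐ ℤ I)) hyI

theorem stmt_2_general (p : ℕ) (hp : p.Prime) (n : ℕ)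
    (V : Type*) [AddCommGroup V] [Module ℚ V] [FiniteDimensional ℚ V]
    (A B : Module.End ℚ V) (hAB : Commute A B) (hA : IsIntegral ℤ A)
    (b : ℕ) (hB : B ^ p ^ b = 1) :
    ∃ z₁ z₂ : ℤ, LinearMap.trace ℚ V A = (z₁ : ℚ) ∧
      LinearMap.trace ℚ V (A * B ^ p ^ n) = (z₂ : ℚ) ∧
      (p : ℤ) ^ (n + 1) ∣ z₂ - z₁ := by
  obtain ⟨z, hz⟩ := IsIntegrallyClosed.isIntegral_iff.mp (isIntegral_trace_end hA)
  obtain ⟨d, hd⟩ := AddSubgroup.mem_zmultiples_iff.mp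
    (trace_end_mul_pow_sub_one_mem_zmultiples hAB hA hp n hB)
  refine ⟨z, z + d * p ^ (n + 1), hz.symm, ?_, ?_⟩
  · rw [mul_sub_one, map_sub, eq_sub_iff_add_eq', ← hz] at hd
    rw [← hd]
    simp
  · rw [add_sub_cancel_left]
    exact dvd_mul_left ..

/-- Let `V` be a finite-dimensional vector space over `ℚ` and let `A, B`
be commuting invertible linear operators on `V`, each of order a power of the prime `p`.
Then for every `m ≥ 1`, the traces of `A * B ^ (p^(m-1))` and of `A` are rational integers
and `tr (A * B ^ (p^(m-1))) ≡ tr A (mod p^m)` in `ℤ`. -/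
theorem stmt_2 (p : ℕ) (hp : p.Prime) (m : ℕ) (hm : 1 ≤ m)
    (V : Type*) [AddCommGroup V] [Module ℚ V] [FiniteDimensional ℚ V]
    (A B : Module.End ℚ V) (hAB : Commute A B)
    (a b : ℕ) (hA : A ^ p ^ a = 1) (hB : B ^ p ^ b = 1) :
    ∃ z₁ z₂ : ℤ, LinearMap.trace ℚ V A = (z₁ : ℚ) ∧
      LinearMap.trace ℚ V (A * B ^ (p ^ (m - 1))) = (z₂ : ℚ) ∧
      (p : ℤ) ^ m ∣ z₂ - z₁ := by
  obtain ⟨n, rfl⟩ := Nat.exists_eq_add_of_le' hm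
  exact stmt_2_general p hp n V A B hAB (.of_pow (pow_pos hp.pos a) (hA ▸ isIntegral_one)) b hB
end

section
/- Let G be a finite group, p a prime, and m ≥ 1. Suppose g, h ∈ G commute and h has order a power of p. Then for every complex character χ of G whose values all lie in ℤ, χ(g) ≡ χ(g · h^(p^(m-1))) (mod p^m). -/
/-!
Let `h` have order `p ^ c` and put `F j = χ (g * h ^ j)`. If `β ^ p ^ c = 1`, the average of
`F j * β ^ j` over `j < p ^ c` is the trace of `g` on the `β⁻¹`-eigenspace of `h`, hence an
algebraic integer. For a primitive `p ^ c`-th root of unity `ζ` this average lies in `ℤ[ζ]`, so the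
`p ^ c`-th cyclotomic polynomial divides `∑ F j * X ^ j` modulo `p ^ c`. That polynomial is
`∑ l < p, X ^ (p ^ (c - 1) * l)`, so modulo `p ^ c` the function `F` is constant along
`i, i + p ^ (c - 1), i + 2 * p ^ (c - 1), …`, which is the case `m = c`. Averaging `F` over these
progressions gives an integer-valued function which agrees with `F` modulo `p ^ (c - 1)` and has
the same integrality property for `p ^ (c - 1)`, so smaller `m` follow by induction on `c`.
-/

open Polynomial Finset
open scoped IntermediateField

section Integrality

variable {R K B V : Type*} [CommRing R]

open scoped IsMulCommutative in
theorem isIntegral_mul_of_commute [Ring B] [Algebra R B] {a b : B}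
    (hab : Commute a b) (ha : IsIntegral R a) (hb : IsIntegral R b) : IsIntegral R (a * b) := by
  have : IsMulCommutative (Algebra.adjoin R {a, b}) :=
    Algebra.isMulCommutative_adjoin R <| by
      rintro x (rfl | rfl) y (rfl | rfl)
      exacts [rfl, hab, hab.symm, rfl]
  have coe_iff (x : Algebra.adjoin R {a, b}) : IsIntegral R (x : B) ↔ IsIntegral R x :=
    isIntegral_algHom_iff (Algebra.adjoin R {a, b}).val Subtype.val_injective
  let a' : Algebra.adjoin R {a, b} := ⟨a, Algebra.subset_adjoin (Set.mem_insert a {b})⟩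
  let b' : Algebra.adjoin R {a, b} := ⟨b, Algebra.subset_adjoin (Set.mem_insert_of_mem a rfl)⟩
  exact (coe_iff (a' * b')).2 (((coe_iff a').1 ha).mul ((coe_iff b').1 hb))

theorem isIntegral_of_isIdempotentElem [Ring B] [Algebra R B] {e : B} (he : IsIdempotentElem e) :
    IsIntegral R e :=
  ⟨X ^ 2 - X, monic_X_pow_sub (by compute_degree!), by simp [sq, he.eq]⟩

theorem isIdempotentElem_average_pow [Field K] [Ring B] [Algebra K B] {n : ℕ}
    (hn : (n : K) ≠ 0) {T : B} (hT : T ^ n = 1) :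
    IsIdempotentElem ((n : K)⁻¹ • ∑ j ∈ range n, T ^ j) := by
  set S := ∑ j ∈ range n, T ^ j with hS
  have mul_sum_eq : T * S = S := by
    rw [← sub_eq_zero, ← sub_one_mul, hS, mul_geom_sum, hT, sub_self]
  have pow_mul_sum_eq (j : ℕ) : T ^ j * S = S := by
    induction j with
    | zero => rw [pow_zero, one_mul]
    | succ j ih => rw [pow_succ, mul_assoc, mul_sum_eq, ih]
  have sum_mul_sum_eq : S * S = (n : K) • S := by
    rw [hS, sum_mul, ← hS, sum_congr rfl fun j _ => pow_mul_sum_eq j, sum_const, card_range,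
      Nat.cast_smul_eq_nsmul]
  rw [IsIdempotentElem, smul_mul_smul_comm, sum_mul_sum_eq, smul_smul, mul_assoc,
    inv_mul_cancel₀ hn, mul_one]

section Eigenvalues

variable [Field K] [Algebra R K] [AddCommGroup V] [Module K V] [Module R V] [IsScalarTower R K V]
  {A : Module.End K V}

theorem isIntegral_of_hasEigenvalue (hA : IsIntegral R A) {μ : K} (hμ : A.HasEigenvalue μ) :
    IsIntegral R μ := by
  obtain ⟨v, hv⟩ := hμ.exists_hasEigenvector
  obtain ⟨P, hP, hPA⟩ := hA
  refine ⟨P, hP, ?_⟩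
  have aeval_smul :=
    Module.End.aeval_apply_of_hasEigenvector (p := P.map (algebraMap R K)) hv
  rw [aeval_map_algebraMap, aeval_def, hPA, eval_map, LinearMap.zero_apply] at aeval_smul
  exact (smul_eq_zero.1 aeval_smul.symm).resolve_right hv.2

theorem isIntegral_trace_of_isIntegral [IsAlgClosed K] [FiniteDimensional K V]
    (hA : IsIntegral R A) : IsIntegral R (LinearMap.trace K V A) := by
  rw [Module.End.trace_eq_sum_roots_charpoly_of_splits (IsAlgClosed.splits _)]
  exact IsIntegral.multiset_sum fun μ hμ => isIntegral_of_hasEigenvalue hA <|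
    (Module.End.hasEigenvalue_iff_isRoot_charpoly A μ).2 (isRoot_of_mem_roots hμ)

end Eigenvalues

end Integrality

section Cyclotomic

variable {R K : Type*}

theorem coeff_geom_sum_X_pow_mul [Semiring R] {f : R[X]} {q n i l : ℕ}
    (hf : f.degree < q) (hi : i < q) (hl : l < n) :
    ((∑ j ∈ range n, (X ^ q) ^ j) * f).coeff (i + q * l) = f.coeff i := by
  have hq : 0 < q := i.zero_le.trans_lt hi
  rw [sum_mul, finsetSum_coeff, sum_eq_single_of_mem l (mem_range.2 hl)]
  · rw [← pow_mul, coeff_X_pow_mul]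
  · intro j _ hne
    rw [← pow_mul, coeff_X_pow_mul', ite_eq_right_iff]
    intro hj
    have hjl : j + 1 ≤ l := by
      have hdiv : j ≤ (i + q * l) / q := (Nat.le_div_iff_mul_le hq).2 (by rwa [mul_comm])
      rw [Nat.add_mul_div_left _ _ hq, Nat.div_eq_of_lt hi] at hdiv
      omega
    refine coeff_eq_zero_of_degree_lt (hf.trans_le ?_)
    have hqjl := Nat.mul_le_mul_left q hjl
    exact_mod_cast (by grind : q ≤ i + q * l - q * j)

theorem coeff_add_mul_of_cyclotomic_prime_pow_dvd [CommRing R] {p k : ℕ}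
    (hp : p.Prime) {f : R[X]} (hf : f.degree < (p ^ (k + 1) : ℕ))
    (hdvd : cyclotomic (p ^ (k + 1)) R ∣ f) {i l : ℕ} (hi : i < p ^ k) (hl : l < p) :
    f.coeff (i + p ^ k * l) = f.coeff i := by
  nontriviality R
  obtain ⟨q, rfl⟩ := hdvd
  have hq : q.degree < (p ^ k : ℕ) := by
    have totient_add : (p ^ (k + 1)).totient + p ^ k = p ^ (k + 1) := by
      rw [Nat.totient_prime_pow_succ hp, ← Nat.mul_succ, Nat.succ_eq_add_one,
        Nat.sub_add_cancel hp.one_le, pow_succ]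
    rw [mul_comm, (cyclotomic.monic _ R).degree_mul, degree_cyclotomic, add_comm] at hf
    refine lt_of_add_lt_add_left (hf.trans_eq ?_)
    exact_mod_cast totient_add.symm
  have coeff_eq {l : ℕ} (hl : l < p) := coeff_geom_sum_X_pow_mul hq hi hl
  rw [cyclotomic_prime_pow_eq_geom_sum hp, coeff_eq hl, ← coeff_eq hp.pos, mul_zero, add_zero]

variable [Field K] [CharZero K]

theorem mem_adjoin_int_of_isIntegral {n : ℕ} [NeZero n] {ζ : K} (hζ : IsPrimitiveRoot ζ n)
    {x : K} (hx : x ∈ ℚ⟮ζ⟯) (hint : IsIntegral ℤ x) : x ∈ Algebra.adjoin ℤ {ζ} := by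
  have hz : IsPrimitiveRoot (IntermediateField.AdjoinSimple.gen ℚ ζ) n :=
    IsPrimitiveRoot.coe_submonoidClass_iff.1 hζ
  have : IsCyclotomicExtension {n} ℚ ℚ⟮ζ⟯ := by
    change IsCyclotomicExtension {n} ℚ ℚ⟮ζ⟯.toSubalgebra
    rw [IntermediateField.adjoin_simple_toSubalgebra_of_isAlgebraic
      (hζ.isIntegral (NeZero.pos n)).tower_top.isAlgebraic]
    exact hζ.adjoin_isCyclotomicExtension ℚ
  have := IsCyclotomicExtension.Rat.isIntegralClosure_adjoin_singleton hz
  let ι : ℚ⟮ζ⟯ →ₐ[ℤ] K := ℚ⟮ζ⟯.val.restrictScalars ℤ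
  have hint' : IsIntegral ℤ (⟨x, hx⟩ : ℚ⟮ζ⟯) :=
    (isIntegral_algHom_iff ι Subtype.val_injective).1 hint
  obtain ⟨y, hy⟩ := (IsIntegralClosure.isIntegral_iff
    (A := Algebra.adjoin ℤ {IntermediateField.AdjoinSimple.gen ℚ ζ})).1 hint'
  have hmem := Subalgebra.mem_map.2 ⟨(y : ℚ⟮ζ⟯), y.2, (congrArg ι hy : _ = x)⟩
  rwa [AlgHom.map_adjoin_singleton] at hmem

theorem cyclotomic_dvd_map_of_isIntegral_div {n N : ℕ} [NeZero n] [NeZero N] {ζ : K}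
    (hζ : IsPrimitiveRoot ζ n) {f : ℤ[X]} (hf : IsIntegral ℤ (aeval ζ f / N)) :
    cyclotomic n (ZMod N) ∣ f.map (Int.castRingHom (ZMod N)) := by
  have hmem : aeval ζ f / N ∈ ℚ⟮ζ⟯ := by
    refine div_mem ?_ (natCast_mem _ N)
    rw [← IntermediateField.AdjoinSimple.coe_gen ℚ ζ, ← IntermediateField.algebraMap_apply,
      aeval_algebraMap_apply]
    exact Subtype.property _
  obtain ⟨P, hP⟩ : ∃ P : ℤ[X], aeval ζ P = aeval ζ f / N := by
    rw [← AlgHom.mem_range, ← Algebra.adjoin_singleton_eq_range_aeval]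
    exact mem_adjoin_int_of_isIntegral hζ hmem hf
  have hroot : aeval ζ (f - (N : ℤ[X]) * P) = 0 := by
    rw [map_sub, map_mul, map_natCast, hP, mul_div_cancel₀ _ (NeZero.ne _), sub_self]
  have hdvd : cyclotomic n ℤ ∣ f - (N : ℤ[X]) * P := by
    rw [cyclotomic_eq_minpoly hζ (NeZero.pos n)]
    exact minpoly.isIntegrallyClosed_dvd (hζ.isIntegral (NeZero.pos n)) hroot
  simpa using Polynomial.map_dvd (Int.castRingHom (ZMod N)) hdvd

end Cyclotomic

theorem sum_range_mul_eq_sum_sum {M : Type*} [AddCommMonoid M] (f : ℕ → M) (n q : ℕ) :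
    ∑ j ∈ range (n * q), f j = ∑ i ∈ range n, ∑ l ∈ range q, f (i + n * l) := by
  rw [sum_comm]
  induction q with
  | zero => simp
  | succ q ih =>
    rw [Nat.mul_succ, sum_range_add, ih, sum_range_succ]
    simp only [add_comm]

section TwistedAverage

variable {K : Type*} [Field K]

/-- The average of `F j * β ^ j` over `j < n`. For an `n`-periodic `F` and an `n`-th root of unity
`β`, this is the normalised Fourier coefficient of `F`, as a function on `ℤ / n`, at the character
`j ↦ β⁻¹ ^ j`. -/
def twistedAverage (F : ℕ → ℤ) (n : ℕ) (β : K) : K :=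
  (∑ j ∈ range n, (F j : K) * β ^ j) / n

variable [CharZero K]

theorem modEq_add_mul_of_isIntegral_twistedAverage {p k : ℕ} (hp : p.Prime) {ζ : K}
    (hζ : IsPrimitiveRoot ζ (p ^ (k + 1))) {F : ℕ → ℤ}
    (hF : IsIntegral ℤ (twistedAverage F (p ^ (k + 1)) ζ)) {i l : ℕ} (hi : i < p ^ k)
    (hl : l < p) : F i ≡ F (i + p ^ k * l) [ZMOD p ^ (k + 1)] := by
  have : NeZero p := ⟨hp.ne_zero⟩
  set f : ℤ[X] := (PowerSeries.mk F).trunc (p ^ (k + 1)) with hf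
  have aeval_f : aeval ζ f = ∑ j ∈ range (p ^ (k + 1)), (F j : K) * ζ ^ j := by
    simp [hf, aeval_def, PowerSeries.eval₂_trunc_eq_sum_range]
  rw [twistedAverage, ← aeval_f] at hF
  have hdeg : (f.map (Int.castRingHom (ZMod (p ^ (k + 1))))).degree < (p ^ (k + 1) : ℕ) :=
    degree_map_le.trans_lt (PowerSeries.degree_trunc_lt _ _)
  have hlt : i + p ^ k * l < p ^ (k + 1) := by
    rw [pow_succ]
    nlinarith [Nat.mul_le_mul_left (p ^ k) (Nat.succ_le_of_lt hl)]
  have hcoeff := coeff_add_mul_of_cyclotomic_prime_pow_dvd hp hdeg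
    (cyclotomic_dvd_map_of_isIntegral_div hζ hF) hi hl
  simp only [hf, coeff_map, PowerSeries.coeff_trunc, hlt, (Nat.le_add_right _ _).trans_lt hlt,
    if_true, PowerSeries.coeff_mk, eq_intCast] at hcoeff
  exact_mod_cast (ZMod.intCast_eq_intCast_iff _ _ _).1 hcoeff.symm

theorem twistedAverage_mul_eq {n q : ℕ} [NeZero q] {F G : ℕ → ℤ}
    (hG : ∀ i < n, q * G i = ∑ l ∈ range q, F (i + n * l)) {β : K} (hβ : β ^ n = 1) :
    twistedAverage F (n * q) β = twistedAverage G n β := by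
  have hq : (q : K) ≠ 0 := NeZero.ne _
  have hsum : ∑ j ∈ range (n * q), (F j : K) * β ^ j = q * ∑ i ∈ range n, (G i : K) * β ^ i := by
    rw [sum_range_mul_eq_sum_sum, mul_sum]
    refine sum_congr rfl fun i hi => ?_
    have hGi : (q : K) * G i = ∑ l ∈ range q, (F (i + n * l) : K) := by
      exact_mod_cast congrArg (Int.cast : ℤ → K) (hG i (mem_range.1 hi))
    simp only [pow_add, pow_mul, hβ, one_pow, mul_one, ← mul_assoc, hGi, sum_mul]
  rw [twistedAverage, twistedAverage, hsum, Nat.cast_mul, mul_comm (n : K), mul_div_mul_left _ _ hq]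

theorem modEq_of_isIntegral_twistedAverage {p r c : ℕ} (hp : p.Prime) (hr : r < c) {ζ : K}
    (hζ : IsPrimitiveRoot ζ (p ^ c)) {F : ℕ → ℤ}
    (hF : ∀ β : K, β ^ p ^ c = 1 → IsIntegral ℤ (twistedAverage F (p ^ c) β)) :
    F 0 ≡ F (p ^ r) [ZMOD p ^ (r + 1)] := by
  have : NeZero p := ⟨hp.ne_zero⟩
  induction c, hr using Nat.le_induction generalizing F ζ with
  | base =>
    have hmod := modEq_add_mul_of_isIntegral_twistedAverage hp hζ (hF ζ hζ.pow_eq_one)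
      (pow_pos hp.pos r) hp.one_lt
    rwa [zero_add, mul_one] at hmod
  | succ k hrk ih =>
    have hsum {i : ℕ} (hi : i < p ^ k) :
        ∑ l ∈ range p, F (i + p ^ k * l) ≡ p * F i [ZMOD p ^ (k + 1)] := by
      have hmod := Int.ModEq.sum fun l (hl : l ∈ range p) =>
        modEq_add_mul_of_isIntegral_twistedAverage hp hζ (hF ζ hζ.pow_eq_one) hi (mem_range.1 hl)
      rw [sum_const, card_range, nsmul_eq_mul] at hmod
      exact hmod.symm
    let G (i : ℕ) : ℤ := (∑ l ∈ range p, F (i + p ^ k * l)) / p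
    have hG {i : ℕ} (hi : i < p ^ k) : p * G i = ∑ l ∈ range p, F (i + p ^ k * l) :=
      Int.mul_ediv_cancel' <| ((hsum hi).of_dvd (dvd_pow_self _ k.succ_ne_zero)).dvd_iff.2
        (dvd_mul_right _ _)
    have hGF {i : ℕ} (hi : i < p ^ k) : G i ≡ F i [ZMOD p ^ k] := by
      refine Int.ModEq.mul_left_cancel' (c := p) (by exact_mod_cast hp.ne_zero) ?_
      rw [hG hi, ← pow_succ']
      exact hsum hi
    have hGint (β : K) (hβ : β ^ p ^ k = 1) : IsIntegral ℤ (twistedAverage G (p ^ k) β) := by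
      rw [← twistedAverage_mul_eq (fun i => hG) hβ, ← pow_succ]
      exact hF β (by rw [pow_succ, pow_mul, hβ, one_pow])
    have hζp : IsPrimitiveRoot (ζ ^ p) (p ^ k) := hζ.pow (pow_pos hp.pos _) (pow_succ' p k)
    have hdvd : (p : ℤ) ^ (r + 1) ∣ p ^ k := pow_dvd_pow _ hrk
    calc F 0 ≡ G 0 [ZMOD _] := ((hGF (pow_pos hp.pos k)).of_dvd hdvd).symm
      _ ≡ G (p ^ r) [ZMOD _] := ih hζp hGint
      _ ≡ F (p ^ r) [ZMOD _] := (hGF (Nat.pow_lt_pow_right hp.one_lt hrk)).of_dvd hdvd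

theorem isIntegral_twistedAverage_of_trace_eq [IsAlgClosed K] {V : Type*} [AddCommGroup V]
    [Module K V] [FiniteDimensional K V] {A T : Module.End K V} (hAT : Commute A T)
    (hA : IsIntegral ℤ A) {n : ℕ} [NeZero n] (hT : T ^ n = 1) {F : ℕ → ℤ}
    (hF : ∀ j, LinearMap.trace K V (A * T ^ j) = F j) {β : K} (hβ : β ^ n = 1) :
    IsIntegral ℤ (twistedAverage F n β) := by
  have hβT : (β • T) ^ n = 1 := by rw [_root_.smul_pow, hβ, hT, one_smul]
  set E : Module.End K V := (n : K)⁻¹ • ∑ j ∈ range n, (β • T) ^ j with hE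
  have hE_idem : IsIdempotentElem E := isIdempotentElem_average_pow (NeZero.ne _) hβT
  have hAE : Commute A E :=
    (Commute.sum_right _ _ _ fun j _ => (hAT.smul_right β).pow_right j).smul_right _
  have trace_eq : LinearMap.trace K V (A * E) = twistedAverage F n β := by
    simp only [hE, twistedAverage, _root_.smul_pow, mul_smul_comm, mul_sum, map_smul, map_sum, hF,
      smul_eq_mul, div_eq_inv_mul, mul_comm (β ^ _)]
  rw [← trace_eq]
  exact isIntegral_trace_of_isIntegral
    (isIntegral_mul_of_commute hAE hA (isIntegral_of_isIdempotentElem hE_idem))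

end TwistedAverage

theorem stmt_3_general {p r c : ℕ} (hp : p.Prime) {G K V : Type*} [Monoid G] [Field K] [CharZero K]
    [AddCommGroup V] [Module K V] [FiniteDimensional K V] (ρ : Representation K G V) {g h : G}
    (hgh : Commute g h) (hg : IsIntegral ℤ (ρ g)) (hh : h ^ p ^ c = 1)
    (hint : ∀ j : ℕ, ∃ z : ℤ, ρ.character (g * h ^ j) = z) :
    ∃ z : ℤ, ρ.character g - ρ.character (g * h ^ p ^ r) = (p : K) ^ (r + 1) * z := by
  choose F hF using hint
  rcases le_or_gt c r with hcr | hrc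
  · have h_pow : h ^ p ^ r = 1 :=
      orderOf_dvd_iff_pow_eq_one.1 ((orderOf_dvd_of_pow_eq_one hh).trans (pow_dvd_pow p hcr))
    exact ⟨0, by rw [h_pow, mul_one, sub_self, Int.cast_zero, mul_zero]⟩
  have : NeZero p := ⟨hp.ne_zero⟩
  let L := AlgebraicClosure K
  let Φ := Module.End.baseChangeHom K L V
  obtain ⟨ζ, hζ⟩ := HasEnoughRootsOfUnity.exists_primitiveRoot L (p ^ c)
  have hT : Φ (ρ h) ^ p ^ c = 1 := by rw [← map_pow, ← map_pow, hh, map_one, map_one]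
  have trace_eq (j : ℕ) : LinearMap.trace L _ (Φ (ρ g) * Φ (ρ h) ^ j) = F j := by
    rw [← map_pow, ← map_pow, ← map_mul, ← map_mul]
    exact (LinearMap.trace_baseChange _ L).trans (by rw [← map_intCast (algebraMap K L), ← hF]; rfl)
  have hmod : F 0 ≡ F (p ^ r) [ZMOD p ^ (r + 1)] :=
    modEq_of_isIntegral_twistedAverage hp hrc hζ fun β hβ =>
      isIntegral_twistedAverage_of_trace_eq ((hgh.map ρ).map Φ) (map_isIntegral_int Φ hg) hT
        trace_eq hβ
  obtain ⟨z, hz⟩ := hmod.symm.dvd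
  refine ⟨z, ?_⟩
  have character_eq : ρ.character g = F 0 := by rw [← hF, pow_zero, mul_one]
  rw [character_eq, hF]
  exact_mod_cast congrArg (Int.cast : ℤ → K) hz

/-- Let `G` be a finite group, `p` a prime, `m ≥ 1`.  Suppose `g, h ∈ G`
commute and `h` has order a power of `p`.  Then for every complex character `χ` of `G`
all of whose values are rational integers, `χ g ≡ χ (g * h ^ (p^(m-1))) (mod p^m)`. -/
theorem stmt_3 (p m : ℕ) (hp : p.Prime) (hm : 1 ≤ m)
    (G : Type) [Group G] [Fintype G] (g h : G) (hgh : Commute g h)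
    (c : ℕ) (hord : orderOf h = p ^ c)
    (V : FDRep ℂ G) (hint : ∀ x : G, ∃ z : ℤ, V.character x = (z : ℂ)) :
    ∃ z : ℤ, V.character g - V.character (g * h ^ (p ^ (m - 1))) = ((p : ℂ)) ^ m * (z : ℂ) := by
  obtain ⟨r, rfl⟩ := Nat.exists_eq_add_of_le' hm
  exact stmt_3_general hp V.ρ hgh
    (.of_pow Fintype.card_pos (by rw [← map_pow, pow_card_eq_one, map_one]; exact isIntegral_one))
    (hord ▸ pow_orderOf_eq_one h) fun _ => hint _
end

section
/- Let σ ∈ S_n be a permutation whose cycle type contains p^m parts of size k, and let σ' have the cycle type obtained by replacing those p^m parts of size k with p^(m-1) parts of size pk. Then χ(σ) ≡ χ(σ') (mod p^m) for every (complex, necessarily integer-valued) character χ of S_n. -/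
open Equiv

/-- The full cycle type of a permutation of `Fin n`: the cycle lengths including
fixed points as cycles of length 1. -/
def fullCycleType {n : ℕ} (σ : Equiv.Perm (Fin n)) : Multiset ℕ :=
  σ.cycleType + Multiset.replicate (n - σ.cycleType.sum) 1

/-!
Let `χ` be a character of `S_n`, let `c` be a cycle and `τ` a permutation disjoint from it. If
`c ^ N = 1`, then `f a = χ (τ * c ^ a)` is a function on `ℤ/N`, invariant under multiplication by
units because raising a permutation to a power prime to its order preserves its cycle type. Its
Fourier coefficients are the traces of `τ` on the eigenspaces of `c`, hence algebraic integers, and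
they inherit the invariance under units. Möbius inversion then gives `f a = ∑ l ∣ a, l * B l` with
algebraic integers `B l`, so that `f (p ^ m) - f (p ^ (m - 1)) = p ^ m * B (p ^ m)`. Since `χ` takes
integer values, `B (p ^ m)` is rational, hence an integer. For `c` of length `p ^ m * k`, the powers
`c ^ p ^ m` and `c ^ p ^ (m - 1)` split into `p ^ m` cycles of length `k` and `p ^ (m - 1)` cycles
of length `p * k`.
-/

section Fourier

open ZMod

lemma natCast_dvd_natCast_iff_of_dvd {N i d : ℕ} (hi : i ∣ N) :
    (i : ZMod N) ∣ (d : ZMod N) ↔ i ∣ d := by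
  refine ⟨fun h ↦ ?_, fun h ↦ map_dvd (Nat.castRingHom (ZMod N)) h⟩
  have hzero := map_dvd (castHom hi (ZMod i)) h
  rwa [map_natCast, map_natCast, natCast_self, zero_dvd_iff, natCast_eq_zero_iff] at hzero

variable {N : ℕ} [NeZero N]

lemma exists_eq_sum_divisors_of_unit_invariant {A : Type*} [AddCommGroup A]
    {F : ZMod N → A} (hF : ∀ (u : (ZMod N)ˣ) x, F (u * x) = F x) {S : AddSubgroup A}
    (hS : ∀ x, F x ∈ S) :
    ∃ B : ℕ → A, (∀ i, B i ∈ S) ∧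
      ∀ x, F x = ∑ i ∈ N.divisors with ((i : ℕ) : ZMod N) ∣ x, B i := by
  let B : ℕ → A := fun e ↦
    ∑ x ∈ e.divisorsAntidiagonal, ArithmeticFunction.moebius x.1 • F ((x.2 : ℕ) : ZMod N)
  have sum_B : ∀ d : ℕ, d > 0 → ∑ i ∈ d.divisors, B i = F (d : ZMod N) :=
    ArithmeticFunction.sum_eq_iff_sum_smul_moebius_eq.2 fun _ _ ↦ rfl
  refine ⟨B, fun e ↦ S.sum_mem fun x _ ↦ S.zsmul_mem (hS _) _, fun x ↦ ?_⟩
  obtain ⟨d, hd, _, ⟨u, rfl⟩, rfl⟩ := x.eq_unit_mul_divisor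
  have filter_eq : {i ∈ N.divisors | ((i : ℕ) : ZMod N) ∣ u * d} = d.divisors := by
    rw [← Nat.divisors_filter_dvd_of_dvd (NeZero.ne N) hd]
    refine Finset.filter_congr fun i hi ↦ ?_
    rw [Units.dvd_mul_left, natCast_dvd_natCast_iff_of_dvd (Nat.dvd_of_mem_divisors hi)]
  rw [hF, filter_eq, sum_B d (Nat.pos_of_dvd_of_pos hd (NeZero.pos N))]

open AddSubgroup in
lemma dft_indicator_natCast_dvd {i l : ℕ} (hN : N = i * l) (a : ℕ) :
    𝓕 (fun x : ZMod N ↦ if (i : ZMod N) ∣ x then (1 : ℂ) else 0) a =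
      if l ∣ a then (l : ℂ) else 0 := by
  have hi : 0 < i := Nat.pos_of_ne_zero fun h ↦ NeZero.ne N (by simp [hN, h])
  let H := zmultiples (i : ZMod N)
  have mem_H (x : ZMod N) : x ∈ H ↔ (i : ZMod N) ∣ x := by
    constructor
    · rintro ⟨k, rfl⟩
      simp
    · rintro ⟨k, rfl⟩
      exact ⟨k.val, by simp [mul_comm]⟩
  let ψ : AddChar H ℂ := (stdAddChar.mulShift (-(a : ZMod N))).compAddMonoidHom H.subtype
  have ψ_eq_zero : ψ = 0 ↔ l ∣ a := by
    rw [AddChar.eq_zero_iff]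
    trans (a : ZMod N) * i = 0
    · constructor
      · intro h
        refine injective_stdAddChar ?_
        simpa [ψ, AddChar.map_neg_eq_inv, mul_comm] using h ⟨i, mem_zmultiples _⟩
      · rintro h ⟨_, k, rfl⟩
        simp [ψ, mul_left_comm _ (k : ZMod N), h]
    · rw [← Nat.cast_mul, natCast_eq_zero_iff, hN, mul_comm a, Nat.mul_dvd_mul_iff_left hi]
  have card_H : Nat.card H = l := by
    rw [Nat.card_zmultiples, addOrderOf_coe _ (NeZero.ne N), hN, Nat.gcd_mul_right_left,
      Nat.mul_div_cancel_left _ hi]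
  classical
  let _ : Fintype H := Fintype.ofFinite H
  calc 𝓕 (fun x : ZMod N ↦ if (i : ZMod N) ∣ x then (1 : ℂ) else 0) a
      = ∑ x with x ∈ H, stdAddChar (-(x * (a : ZMod N))) := by
        simp [dft_apply, mem_H, Finset.sum_filter]
    _ = ∑ x : H, ψ x := by
        rw [Finset.sum_subtype (p := (· ∈ H)) (F := ‹Fintype H›) _ (by simp)]
        simp [ψ, mul_comm]
    _ = _ := by simp only [AddChar.sum_eq_ite, ψ_eq_zero, ← Nat.card_eq_fintype_card, card_H]

lemma invDFT_unit_mul {E : Type*} [AddCommGroup E] [Module ℂ E]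
    {f : ZMod N → E} (hf : ∀ (u : (ZMod N)ˣ) a, f (u * a) = f a) (u : (ZMod N)ˣ) (x : ZMod N) :
    𝓕⁻ f (u * x) = 𝓕⁻ f x := by
  have h := dft_comp_unitMul f u⁻¹ (-x)
  rw [funext (hf u⁻¹), inv_inv] at h
  rw [invDFT_apply', invDFT_apply', h, mul_neg]

lemma exists_eq_sum_divisors_mul_of_unit_invariant {f : ZMod N → ℂ}
    (hf : ∀ (u : (ZMod N)ˣ) a, f (u * a) = f a) {S : AddSubgroup ℂ} (hS : ∀ x, 𝓕⁻ f x ∈ S) :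
    ∃ B : ℕ → ℂ, (∀ l, B l ∈ S) ∧ ∀ a, a ∣ N → f a = ∑ l ∈ a.divisors, (l : ℂ) * B l := by
  obtain ⟨B, hB, invDFT_eq⟩ := exists_eq_sum_divisors_of_unit_invariant (invDFT_unit_mul hf) hS
  refine ⟨fun l ↦ B (N / l), fun l ↦ hB _, fun a ha ↦ ?_⟩
  have invDFT_eq' : 𝓕⁻ f =
      ∑ i ∈ N.divisors, B i • fun x : ZMod N ↦ if (i : ZMod N) ∣ x then (1 : ℂ) else 0 := by
    ext x
    simp [invDFT_eq, Finset.sum_filter]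
  calc f a = 𝓕 (𝓕⁻ f) a := by rw [LinearEquiv.apply_symm_apply]
    _ = ∑ i ∈ N.divisors, B i * if N / i ∣ a then ((N / i : ℕ) : ℂ) else 0 := by
      rw [invDFT_eq', map_sum, Finset.sum_apply]
      refine Finset.sum_congr rfl fun i hi ↦ ?_
      rw [_root_.map_smul, Pi.smul_apply, smul_eq_mul, dft_indicator_natCast_dvd
        (Nat.mul_div_cancel' (Nat.dvd_of_mem_divisors hi)).symm]
    _ = ∑ l ∈ N.divisors, if l ∣ a then (l : ℂ) * B (N / l) else 0 := by
      rw [← Nat.sum_div_divisors]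
      refine Finset.sum_congr rfl fun i hi ↦ ?_
      rw [Nat.div_div_self (Nat.dvd_of_mem_divisors hi) (NeZero.ne N), mul_ite, mul_zero, mul_comm]
    _ = ∑ l ∈ a.divisors, (l : ℂ) * B (N / l) := by
      rw [← Finset.sum_filter, Nat.divisors_filter_dvd_of_dvd (NeZero.ne N) ha]

end Fourier

section SpectralProjection

open ZMod

variable {N : ℕ} [NeZero N] {A : Type*} [Ring A] [Algebra ℂ A]

/-- If `T ^ N = 1`, this is the projection onto the eigenspace of `T` for the eigenvalue
`ZMod.stdAddChar (-x)`; the sign is that of Mathlib's inverse Fourier transform. -/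
noncomputable def spectralProjection (N : ℕ) [NeZero N] (T : A) (x : ZMod N) : A :=
  𝓕⁻ (fun a : ZMod N ↦ T ^ a.val) x

lemma commute_spectralProjection {S T : A} (h : Commute S T) (x : ZMod N) :
    Commute S (spectralProjection N T x) := by
  rw [spectralProjection, invDFT_apply]
  exact (Commute.sum_right _ _ _ fun a _ ↦ (h.pow_right _).smul_right _).smul_right _

lemma pow_mul_spectralProjection {T : A} (hT : T ^ N = 1) (a x : ZMod N) :
    T ^ a.val * spectralProjection N T x =
      (stdAddChar (-(a * x)) : ℂ) • spectralProjection N T x := by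
  rw [spectralProjection, invDFT_apply, mul_smul_comm, smul_comm (stdAddChar (-(a * x)) : ℂ),
    Finset.mul_sum, Finset.smul_sum (r := (stdAddChar (-(a * x)) : ℂ))]
  congr 1
  refine Fintype.sum_equiv (Equiv.addLeft a) _ _ fun j ↦ ?_
  rw [Equiv.coe_addLeft, mul_smul_comm, smul_smul, ← AddChar.map_add_eq_mul, ← pow_add,
    pow_eq_pow_mod _ hT, ← val_add]
  congr 2
  ring

lemma isIdempotentElem_spectralProjection {T : A} (hT : T ^ N = 1) (x : ZMod N) :
    IsIdempotentElem (spectralProjection N T x) := by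
  set e := spectralProjection N T x with he
  calc e * e = (N : ℂ)⁻¹ • ∑ a : ZMod N, (stdAddChar (a * x) : ℂ) • (T ^ a.val * e) := by
        nth_rewrite 1 [he]
        simp only [spectralProjection, invDFT_apply, smul_mul_assoc, Finset.sum_mul]
    _ = (N : ℂ)⁻¹ • ∑ _a : ZMod N, e := by
        simp only [e, pow_mul_spectralProjection hT, smul_smul, ← AddChar.map_add_eq_mul,
          add_neg_cancel, AddChar.map_zero_eq_one, one_smul]
    _ = e := by
        rw [Finset.sum_const, Finset.card_univ, ZMod.card, ← Nat.cast_smul_eq_nsmul ℂ,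
          inv_smul_smul₀ (NeZero.ne _)]

end SpectralProjection

section Trace

open ZMod

lemma exists_intCast_eq_trace_of_isIdempotentElem {K V : Type*} [Field K] [AddCommGroup V]
    [Module K V] [FiniteDimensional K V] {e : Module.End K V} (he : IsIdempotentElem e) :
    ∃ z : ℤ, (z : K) = LinearMap.trace K V e :=
  ⟨Module.finrank K e.range,
    by rw [(LinearMap.IsIdempotentElem.isProj_range e he).trace, Int.cast_natCast]⟩

lemma isIntegral_trace {R K V : Type*} [CommRing R] [Field K] [IsAlgClosed K] [Algebra R K]
    [AddCommGroup V] [Module K V] [FiniteDimensional K V] [Algebra R (Module.End K V)]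
    [IsScalarTower R K (Module.End K V)] {T : Module.End K V} (hT : IsIntegral R T) :
    IsIntegral R (LinearMap.trace K V T) := by
  rw [Module.End.trace_eq_sum_roots_charpoly_of_splits (IsAlgClosed.splits _)]
  refine IsIntegral.multiset_sum fun μ hμ ↦ ?_
  have hev : T.HasEigenvalue μ :=
    (Module.End.hasEigenvalue_iff_isRoot_charpoly _ _).2 (Polynomial.isRoot_of_mem_roots hμ)
  obtain ⟨v, hv⟩ := hev.exists_hasEigenvector
  obtain ⟨q, q_monic, hq⟩ := hT
  refine ⟨q, q_monic, ?_⟩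
  have h := Module.End.aeval_apply_of_hasEigenvector (p := q.map (algebraMap R K)) hv
  rw [Polynomial.aeval_map_algebraMap, Polynomial.aeval_def, hq, LinearMap.zero_apply, eq_comm,
    Polynomial.eval_map] at h
  exact (smul_eq_zero.1 h).resolve_right hv.2

lemma isIntegral_of_pow_eq_self {R A : Type*} [CommRing R] [Ring A] [Algebra R A] {x : A} {r : ℕ}
    (hr : 1 < r) (hx : x ^ r = x) : IsIntegral R x := by
  nontriviality R
  refine ⟨.X ^ r - .X, Polynomial.monic_X_pow_sub ?_, by simp [hx]⟩
  rw [Polynomial.degree_X]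
  exact_mod_cast hr

variable {N : ℕ} [NeZero N] {V : Type*} [AddCommGroup V] [Module ℂ V]

lemma isIntegral_trace_mul_spectralProjection [FiniteDimensional ℂ V] {S T : Module.End ℂ V}
    (h : Commute S T) (hS : IsOfFinOrder S) (hT : T ^ N = 1) (x : ZMod N) :
    IsIntegral ℤ (LinearMap.trace ℂ V (S * spectralProjection N T x)) := by
  have he := isIdempotentElem_spectralProjection hT x
  refine isIntegral_trace (isIntegral_of_pow_eq_self (r := orderOf S + 1) ?_ ?_)
  · exact Nat.succ_lt_succ hS.orderOf_pos
  · rw [(commute_spectralProjection h x).mul_pow, he.pow_succ_eq, pow_succ, pow_orderOf_eq_one,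
      one_mul]

lemma exists_trace_mul_pow_eq_sum_divisors_mul {S T : Module.End ℂ V} (hT : T ^ N = 1)
    (hinv : ∀ u a : ℕ, u.Coprime N →
      LinearMap.trace ℂ V (S * T ^ (u * a)) = LinearMap.trace ℂ V (S * T ^ a))
    {C : AddSubgroup ℂ} (hC : ∀ x, LinearMap.trace ℂ V (S * spectralProjection N T x) ∈ C) :
    ∃ B : ℕ → ℂ, (∀ l, B l ∈ C) ∧
      ∀ a, a ∣ N → LinearMap.trace ℂ V (S * T ^ a) = ∑ l ∈ a.divisors, (l : ℂ) * B l := by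
  let f : ZMod N → ℂ := fun a ↦ LinearMap.trace ℂ V (S * T ^ a.val)
  have f_unit_mul (u : (ZMod N)ˣ) (a : ZMod N) : f (u * a) = f a := by
    simp only [f]
    rw [val_mul, ← pow_eq_pow_mod _ hT, hinv _ _ (val_coe_unit_coprime u)]
  have invDFT_f (x : ZMod N) :
      𝓕⁻ f x = LinearMap.trace ℂ V (S * spectralProjection N T x) := by
    simp [f, spectralProjection, invDFT_apply, Finset.mul_sum]
  obtain ⟨B, hB, hfB⟩ :=
    exists_eq_sum_divisors_mul_of_unit_invariant f_unit_mul fun x ↦ invDFT_f x ▸ hC x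
  refine ⟨B, hB, fun a ha ↦ ?_⟩
  rw [← hfB a ha]
  simp only [f]
  rw [val_natCast, ← pow_eq_pow_mod _ hT]

end Trace

section Characters

variable {G : Type*} [Group G] (V : FDRep ℂ G)

lemma character_eq_of_isConj {g h : G} (hgh : IsConj g h) : V.character g = V.character h := by
  obtain ⟨c, rfl⟩ := isConj_iff.1 hgh
  exact (V.char_conj g c).symm

lemma exists_character_mul_pow_eq_sum_divisors_mul {c τ : G} {N : ℕ} [NeZero N] (hc : c ^ N = 1)
    (hconj : ∀ u a : ℕ, u.Coprime N → IsConj (τ * c ^ (u * a)) (τ * c ^ a)) {C : AddSubgroup ℂ}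
    (hC : ∀ x, LinearMap.trace ℂ V (V.ρ τ * spectralProjection N (V.ρ c) x) ∈ C) :
    ∃ B : ℕ → ℂ, (∀ l, B l ∈ C) ∧
      ∀ a, a ∣ N → V.character (τ * c ^ a) = ∑ l ∈ a.divisors, (l : ℂ) * B l := by
  have trace_eq (a : ℕ) : LinearMap.trace ℂ V (V.ρ τ * V.ρ c ^ a) = V.character (τ * c ^ a) := by
    rw [← map_pow, ← map_mul]
    rfl
  simp only [← trace_eq]
  refine exists_trace_mul_pow_eq_sum_divisors_mul (by rw [← map_pow, hc, map_one]) ?_ hC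
  intro u a hu
  rw [trace_eq, trace_eq, character_eq_of_isConj V (hconj u a hu)]

lemma exists_intCast_eq_character_of_isConj_pow {g : G} (hg : IsOfFinOrder g)
    (hconj : ∀ u : ℕ, u.Coprime (orderOf g) → IsConj (g ^ u) g) :
    ∃ z : ℤ, (z : ℂ) = V.character g := by
  have : NeZero (orderOf g) := ⟨hg.orderOf_pos.ne'⟩
  obtain ⟨B, hB, character_eq⟩ := exists_character_mul_pow_eq_sum_divisors_mul V (τ := 1)
    (C := (Int.castAddHom ℂ).range) (pow_orderOf_eq_one g)
    (fun u a hu ↦ by simpa only [one_mul, pow_mul] using (hconj u hu).pow a) fun x ↦ by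
      rw [map_one, one_mul]
      exact exists_intCast_eq_trace_of_isIdempotentElem
        (isIdempotentElem_spectralProjection (by rw [← map_pow, pow_orderOf_eq_one, map_one]) x)
  have h := character_eq 1 (one_dvd _)
  rw [one_mul, pow_one, Nat.divisors_one, Finset.sum_singleton, Nat.cast_one, one_mul] at h
  exact h ▸ hB 1

lemma exists_isIntegral_character_sub_eq {c τ : G} (hcτ : Commute τ c) {N : ℕ} [NeZero N]
    (hc : c ^ N = 1) (hτ : IsOfFinOrder τ)
    (hconj : ∀ u a : ℕ, u.Coprime N → IsConj (τ * c ^ (u * a)) (τ * c ^ a))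
    {p m : ℕ} (hp : p.Prime) (hpm : p ^ (m + 1) ∣ N) :
    ∃ w : ℂ, IsIntegral ℤ w ∧
      V.character (τ * c ^ p ^ (m + 1)) - V.character (τ * c ^ p ^ m) = (p : ℂ) ^ (m + 1) * w := by
  obtain ⟨B, hB, character_eq⟩ := exists_character_mul_pow_eq_sum_divisors_mul V
    (C := (integralClosure ℤ ℂ).toSubring.toAddSubgroup) hc hconj
    (isIntegral_trace_mul_spectralProjection (hcτ.map V.ρ) (MonoidHom.isOfFinOrder V.ρ hτ)
      (by rw [← map_pow, hc, map_one]))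
  refine ⟨B (p ^ (m + 1)), hB _, ?_⟩
  rw [character_eq _ hpm, character_eq _ ((pow_dvd_pow p m.le_succ).trans hpm),
    Nat.sum_divisors_prime_pow hp, Nat.sum_divisors_prime_pow hp, Finset.sum_range_succ _ (m + 1),
    add_sub_cancel_left, Nat.cast_pow]

end Characters

section Permutations

variable {α : Type*} [Fintype α] [DecidableEq α]

lemma cycleType_pow_of_coprime (σ : Perm α) {u : ℕ} (hu : u.Coprime (orderOf σ)) :
    (σ ^ u).cycleType = σ.cycleType := by
  induction σ using Perm.cycle_induction_on with
  | base_one => rw [one_pow]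
  | base_cycles σ hσ =>
    rw [(hσ.pow_iff.2 hu).cycleType, hσ.cycleType, Perm.support_pow_coprime hu]
  | induction_disjoint σ τ hd _ ih₁ ih₂ =>
    rw [hd.orderOf] at hu
    rw [hd.commute.mul_pow, (hd.pow_disjoint_pow u u).cycleType_mul, hd.cycleType_mul,
      ih₁ (hu.coprime_dvd_right (Nat.dvd_lcm_left _ _)),
      ih₂ (hu.coprime_dvd_right (Nat.dvd_lcm_right _ _))]

lemma eq_orderOf_of_mem_cycleType_pow {c : Perm α} (hc : c.IsCycle) {n l : ℕ}
    (hl : l ∈ (c ^ n).cycleType) : l = orderOf (c ^ n) := by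
  refine Nat.dvd_antisymm (Perm.dvd_of_mem_cycleType hl) (orderOf_dvd_of_pow_eq_one ?_)
  obtain ⟨d, τ, hdτ, hd, d_cycle, rfl⟩ := Perm.mem_cycleType_iff.1 hl
  obtain ⟨x, hx⟩ := d_cycle.nonempty_support
  have hxc : c x ≠ x := by
    refine Perm.mem_support.1 (Perm.support_pow_le c n ?_)
    rw [hdτ, hd.support_mul]
    exact Finset.mem_union_left _ hx
  have hxτ : τ x = x := (hd x).resolve_left (Perm.mem_support.1 hx)
  rw [← pow_mul, hc.pow_eq_one_iff' hxc, pow_mul, hdτ, hd.commute.mul_pow, ← d_cycle.orderOf,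
    pow_orderOf_eq_one, one_mul]
  exact Perm.pow_apply_eq_self_of_apply_eq_self hxτ _

lemma cycleType_pow_of_isCycle {c : Perm α} (hc : c.IsCycle) {a l : ℕ} (hal : orderOf c = a * l) :
    (c ^ a).cycleType = (Multiset.replicate a l).filter (2 ≤ ·) := by
  have hal_pos : 0 < a * l := hal ▸ orderOf_pos c
  have horder : orderOf (c ^ a) = l := by
    rw [orderOf_pow_of_dvd (Nat.pos_of_mul_pos_right hal_pos).ne' (hal ▸ dvd_mul_right a l), hal,
      Nat.mul_div_cancel_left _ (Nat.pos_of_mul_pos_right hal_pos)]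
  rcases eq_or_ne l 1 with rfl | hl
  · rw [orderOf_eq_one_iff.1 horder, Perm.cycleType_one, eq_comm, Multiset.filter_eq_nil]
    intro b hb
    rw [Multiset.eq_of_mem_replicate hb]
    lia
  have cycleType_eq : (c ^ a).cycleType = Multiset.replicate (c ^ a).cycleType.card l :=
    Multiset.eq_replicate_card.2 fun b hb ↦ horder ▸ eq_orderOf_of_mem_cycleType_pow hc hb
  have support_eq : (c ^ a).support = c.support := by
    rw [hc.support_pow_eq_iff, orderOf_dvd_iff_pow_eq_one, ← orderOf_eq_one_iff, horder]
    exact hl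
  have card_eq : (c ^ a).cycleType.card = a := by
    have hsum := (c ^ a).sum_cycleType
    rw [support_eq, ← hc.orderOf, hal, cycleType_eq, Multiset.sum_replicate, smul_eq_mul] at hsum
    exact Nat.eq_of_mul_eq_mul_right (Nat.pos_of_mul_pos_left hal_pos) hsum
  rw [cycleType_eq, card_eq, eq_comm, Multiset.filter_eq_self]
  intro b hb
  rw [Multiset.eq_of_mem_replicate hb]
  have := Nat.pos_of_mul_pos_left hal_pos
  lia

lemma exists_isCycle_disjoint_cycleType_eq {N : ℕ} {Q : Multiset ℕ} (hN : 2 ≤ N)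
    (hQ : ∀ l ∈ Q, 2 ≤ l) (hsum : N + Q.sum ≤ Fintype.card α) :
    ∃ c τ : Perm α, c.IsCycle ∧ orderOf c = N ∧ c.Disjoint τ ∧ τ.cycleType = Q := by
  obtain ⟨g, hg⟩ := (Perm.exists_with_cycleType_iff α (m := N ::ₘ Q)).2
    ⟨by rwa [Multiset.sum_cons], Multiset.forall_mem_cons.2 ⟨hN, hQ⟩⟩
  obtain ⟨c, τ, rfl, hcτ, hc, rfl⟩ :=
    Perm.mem_cycleType_iff.1 (hg ▸ Multiset.mem_cons_self N Q)
  refine ⟨c, τ, hc, hc.orderOf, hcτ, ?_⟩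
  rwa [hcτ.cycleType_mul, hc.cycleType, Multiset.singleton_add, Multiset.cons_inj_right] at hg

variable {n : ℕ}

lemma fullCycleType_eq_parts_partition (σ : Perm (Fin n)) :
    fullCycleType σ = σ.partition.parts := by
  rw [fullCycleType, Perm.parts_partition, Perm.sum_cycleType, Fintype.card_fin]

lemma sum_fullCycleType (σ : Perm (Fin n)) : (fullCycleType σ).sum = n := by
  rw [fullCycleType_eq_parts_partition, σ.partition.parts_sum, Fintype.card_fin]

lemma filter_fullCycleType (σ : Perm (Fin n)) :
    (fullCycleType σ).filter (2 ≤ ·) = σ.cycleType := by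
  rw [fullCycleType_eq_parts_partition, Perm.filter_parts_partition_eq_cycleType]

lemma isConj_mul_pow_of_fullCycleType_eq {c τ σ : Perm (Fin n)} (hc : c.IsCycle)
    (hcτ : c.Disjoint τ) {a l : ℕ} (hal : orderOf c = a * l) {P : Multiset ℕ}
    (hτ : τ.cycleType = P.filter (2 ≤ ·)) (hσ : fullCycleType σ = P + Multiset.replicate a l) :
    IsConj (τ * c ^ a) σ := by
  have hτc : τ.Disjoint (c ^ a) := by simpa only [pow_one] using hcτ.symm.pow_disjoint_pow 1 a
  rw [Perm.isConj_iff_cycleType_eq, hτc.cycleType_mul, hτ, cycleType_pow_of_isCycle hc hal,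
    ← Multiset.filter_add, ← hσ, filter_fullCycleType]

end Permutations

lemma exists_intCast_eq_of_isIntegral {K : Type*} [Field K] [CharZero K] {a d : ℤ} (hd : d ≠ 0)
    {w : K} (hw : IsIntegral ℤ w) (h : (a : K) = d * w) : ∃ z : ℤ, (z : K) = w := by
  have w_eq : w = algebraMap ℚ K (a / d) := by
    rw [map_div₀, map_intCast, map_intCast, h, mul_div_cancel_left₀ _ (Int.cast_ne_zero.2 hd)]
  rw [w_eq, isIntegral_algebraMap_iff (algebraMap ℚ K).injective,
    IsIntegrallyClosed.isIntegral_iff] at hw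
  obtain ⟨z, hz⟩ := hw
  exact ⟨z, by rw [w_eq, ← hz, algebraMap_int_eq, Int.coe_castRingHom, map_intCast]⟩

section PermutationCharacters

variable {α : Type*} [Finite α] (V : FDRep ℂ (Perm α))

lemma exists_intCast_eq_character (g : Perm α) : ∃ z : ℤ, (z : ℂ) = V.character g := by
  classical
  have := Fintype.ofFinite α
  exact exists_intCast_eq_character_of_isConj_pow V (isOfFinOrder_of_finite g) fun _ hu ↦
    Perm.isConj_iff_cycleType_eq.2 (cycleType_pow_of_coprime g hu)

lemma exists_character_mul_pow_sub_eq {τ c : Perm α} (hτc : τ.Disjoint c) {p : ℕ} (hp : p.Prime)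
    (m : ℕ) :
    ∃ z : ℤ, V.character (τ * c ^ p ^ (m + 1)) - V.character (τ * c ^ p ^ m) =
      (p : ℂ) ^ (m + 1) * z := by
  classical
  have := Fintype.ofFinite α
  -- The factor `p ^ (m + 1)` serves only to make `p ^ (m + 1)` a divisor of the period `N`.
  let N := p ^ (m + 1) * orderOf c
  have : NeZero N := ⟨mul_ne_zero (pow_ne_zero _ hp.ne_zero) (orderOf_pos c).ne'⟩
  have hcN : orderOf c ∣ N := dvd_mul_left _ _
  have hconj (u a : ℕ) (hu : u.Coprime N) : IsConj (τ * c ^ (u * a)) (τ * c ^ a) := by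
    have disjoint_pow (b : ℕ) : τ.Disjoint (c ^ b) := by
      simpa only [pow_one] using hτc.pow_disjoint_pow 1 b
    rw [Perm.isConj_iff_cycleType_eq, (disjoint_pow _).cycleType_mul,
      (disjoint_pow _).cycleType_mul, mul_comm u, pow_mul, cycleType_pow_of_coprime]
    exact hu.coprime_dvd_right ((orderOf_pow_dvd a).trans hcN)
  obtain ⟨w, hw, sub_eq⟩ := exists_isIntegral_character_sub_eq V hτc.commute
    (orderOf_dvd_iff_pow_eq_one.1 hcN) (isOfFinOrder_of_finite τ) hconj hp (dvd_mul_right _ _)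
  obtain ⟨z₁, hz₁⟩ := exists_intCast_eq_character V (τ * c ^ p ^ (m + 1))
  obtain ⟨z₂, hz₂⟩ := exists_intCast_eq_character V (τ * c ^ p ^ m)
  obtain ⟨z, rfl⟩ := exists_intCast_eq_of_isIntegral (a := z₁ - z₂) (d := (p : ℤ) ^ (m + 1))
    (pow_ne_zero _ (Int.natCast_ne_zero.2 hp.ne_zero)) hw (by push_cast; rw [hz₁, hz₂, sub_eq])
  exact ⟨z, sub_eq⟩

end PermutationCharacters

/-- If the cycle type of `σ'` is obtained from that of `σ` by replacing
`p^m` parts of size `k` with `p^(m-1)` parts of size `pk`, then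
`χ σ ≡ χ σ' (mod p^m)` for every (necessarily integer-valued) character of `S_n`. -/
theorem stmt_10 (p m k n : ℕ) (hp : p.Prime) (hm : 1 ≤ m) (hk : 1 ≤ k)
    (σ σ' : Equiv.Perm (Fin n))
    (hle : Multiset.replicate (p ^ m) k ≤ fullCycleType σ)
    (hσ' : fullCycleType σ' =
      fullCycleType σ - Multiset.replicate (p ^ m) k + Multiset.replicate (p ^ (m - 1)) (p * k))
    (V : FDRep ℂ (Equiv.Perm (Fin n))) :
    ∃ z : ℤ, V.character σ - V.character σ' = ((p : ℂ)) ^ m * (z : ℂ) := by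
  obtain ⟨m, rfl⟩ := Nat.exists_eq_add_of_le' hm
  set P := fullCycleType σ - Multiset.replicate (p ^ (m + 1)) k
  have hσ : fullCycleType σ = P + Multiset.replicate (p ^ (m + 1)) k :=
    (tsub_add_cancel_of_le hle).symm
  have hsum : p ^ (m + 1) * k + (P.filter (2 ≤ ·)).sum ≤ n := by
    have h := sum_fullCycleType σ
    rw [hσ, ← Multiset.filter_add_not (2 ≤ ·) P] at h
    simp only [Multiset.sum_add, Multiset.sum_replicate, smul_eq_mul] at h
    lia
  have hlen : 2 ≤ p ^ (m + 1) * k :=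
    (hp.two_le.trans (Nat.le_self_pow m.succ_ne_zero p)).trans (Nat.le_mul_of_pos_right _ hk)
  obtain ⟨c, τ, hc, horder, hcτ, hτ⟩ := exists_isCycle_disjoint_cycleType_eq hlen
    (fun _ hl ↦ (Multiset.mem_filter.1 hl).2) (hsum.trans_eq (Fintype.card_fin n).symm)
  have hconj : IsConj (τ * c ^ p ^ (m + 1)) σ :=
    isConj_mul_pow_of_fullCycleType_eq hc hcτ horder hτ hσ
  have hconj' : IsConj (τ * c ^ p ^ m) σ' :=
    isConj_mul_pow_of_fullCycleType_eq hc hcτ (by rw [horder, pow_succ, mul_assoc]) hτ hσ'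
  rw [← character_eq_of_isConj V hconj, ← character_eq_of_isConj V hconj']
  exact exists_character_mul_pow_sub_eq V hcτ.symm hp m
end

section
/- Let p be prime, k, m ≥ 1, ξ a partition of n − k·p^m, and set μ = ξ ∪ (k repeated p^m times) and ν = ξ ∪ (pk repeated p^(m−1) times), both partitions of n. With λ = (n − pk, k, k, …, k) (p copies of k) a partition of n, the number of row decompositions of λ by μ is congruent to (the number of row decompositions of λ by ν) minus p^m, modulo p^(m+1). -/
/-- The number of row decompositions of `lam` by `mu`: functions from the parts of `mu`
to the parts of `lam` such that the parts mapped to a given part of `lam` of size `k`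
have total size `k`. -/
noncomputable def rdCount (lam mu : Multiset ℕ) : ℕ :=
  Nat.card {f : Fin mu.toList.length → Fin lam.toList.length //
    ∀ j : Fin lam.toList.length,
      (∑ i ∈ Finset.univ.filter (fun i => f i = j), mu.toList.get i) = lam.toList.get j}

/-!
The row decompositions of `(c, k^p)` by `s` correspond to the ways of packing parts of `s` into `p`
labelled boxes of size `k`, and these are counted by the coefficient of `(X₁ ⋯ X_p)^k` in
`∏ x ∈ s, (1 + p_x)`, where `p_x` is the power sum. Parts larger than `k` do not affect this
coefficient. If `b a` is the corresponding count for `ξ` and `a` boxes, then adjoining `q` parts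
equal to `k` turns `b p` into `∑ j, q.choose j * p.descFactorial j * b (p - j)`, `j` being the
number of these parts that are used, each filling a box by itself. If `p` divides `q`, then modulo
`p * q` the terms with `0 < j < p` vanish, and the term `j = p` is `-q` by Wilson's theorem.
-/

open Finset MvPolynomial

section Multisets

theorem map_univ_toList_get {β : Type*} (s : Multiset β) : univ.val.map s.toList.get = s := by
  rw [Fin.univ_val_map, List.ofFn_get, Multiset.coe_toList]

theorem exists_equiv_toList_get {α β : Type*} [Fintype α] (f : α → β) :
    ∃ e : α ≃ Fin (univ.val.map f).toList.length, ∀ a, (univ.val.map f).toList.get (e a) = f a := by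
  classical
  set l := (univ.val.map f).toList
  have hcard (b : β) : Fintype.card {a // f a = b} = Fintype.card {i // l.get i = b} := by
    have hcount := congrArg (Multiset.count b) (map_univ_toList_get (univ.val.map f))
    simp only [Multiset.count_map, eq_comm (a := b)] at hcount
    rw [Fintype.card_subtype, Fintype.card_subtype]
    exact hcount.symm
  exact ⟨Equiv.ofFiberEquiv fun b => Fintype.equivOfCardEq (hcard b), Equiv.ofFiberEquiv_map _⟩

end Multisets

section Exponents

variable {σ : Type*}

/-- The exponent of the monomial `∏ i ∈ T, X i ^ k`. -/
noncomputable def constExponent (k : ℕ) (T : Finset σ) : σ →₀ ℕ :=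
  Finsupp.indicator T fun _ _ => k

theorem constExponent_apply [DecidableEq σ] (k : ℕ) (T : Finset σ) (i : σ) :
    constExponent k T i = if i ∈ T then k else 0 := by
  simp [constExponent, Finsupp.indicator_apply]

theorem constExponent_empty (k : ℕ) : constExponent k (∅ : Finset σ) = 0 := by
  classical
  ext i
  simp [constExponent_apply]

theorem constExponent_erase [DecidableEq σ] (k : ℕ) (T : Finset σ) (i : σ) :
    constExponent k (T.erase i) = constExponent k T - Finsupp.single i k := by
  ext j
  simp only [constExponent_apply, mem_erase, Finsupp.tsub_apply, Finsupp.single_apply]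
  grind

end Exponents

section RowDecompositions

theorem rdCount_map_univ {κ : Type*} [Fintype κ] [DecidableEq κ] (v : κ → ℕ) (mu : Multiset ℕ) :
    rdCount (univ.val.map v) mu = Nat.card {f : Fin mu.toList.length → κ //
      ∀ j, ∑ i with f i = j, mu.toList.get i = v j} := by
  obtain ⟨e, he⟩ := exists_equiv_toList_get v
  refine (Nat.card_congr ((Equiv.arrowCongr (Equiv.refl _) e).subtypeEquiv fun f => ?_)).symm
  simp [← e.forall_congr_right, he, -List.get_eq_getElem]

/-- The dehomogenization, with one variable set to `1`, of the product of the power sums `p_x` for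
`x ∈ s`: its monomials record the ways to place some of the elements of `s` in boxes indexed by
`σ`, where the elements left over correspond to the variable set to `1`. -/
noncomputable def packingPoly (σ R : Type*) [Fintype σ] [CommSemiring R] (s : Multiset ℕ) :
    MvPolynomial σ R :=
  (s.map fun x => 1 + psum σ R x).prod

variable {σ R : Type*} [Fintype σ] [CommSemiring R]

theorem coeff_packingPoly_map_univ [DecidableEq σ] {ι : Type*} [Fintype ι] (w : ι → ℕ)
    (v : σ →₀ ℕ) :
    coeff v (packingPoly σ R (univ.val.map w)) =
      Nat.card {f : ι → Option σ // ∀ j, ∑ i with f i = some j, w i = v j} := by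
  classical
  have hfactor (n : ℕ) : 1 + psum σ R n =
      ∑ o : Option σ, monomial (o.elim 0 fun j => Finsupp.single j n) 1 := by
    simp [psum, X_pow_eq_monomial]
  have hprod : packingPoly σ R (univ.val.map w) = ∏ i, (1 + psum σ R (w i)) := by
    rw [packingPoly, Multiset.map_map]
    rfl
  have hexponent (f : ι → Option σ) :
      ∑ i, (f i).elim 0 (fun j => Finsupp.single j (w i)) = v ↔
        ∀ j, ∑ i with f i = some j, w i = v j := by
    rw [Finsupp.ext_iff]
    refine forall_congr' fun j => ?_
    rw [Finsupp.finsetSum_apply, sum_filter]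
    refine Eq.congr_left (sum_congr rfl fun i _ => ?_)
    cases f i <;> simp [Finsupp.single_apply]
  simp only [hprod, hfactor, prod_univ_sum, ← monomial_sum_one, coeff_sum, coeff_monomial,
    hexponent, Fintype.piFinset_univ, sum_boole, Nat.card_eq_fintype_card, Fintype.card_subtype]

/-- The elements of `s` placed outside the boxes `σ` have the right total, `c`, automatically. -/
theorem rdCount_cons_map_univ (c : ℕ) (v : σ →₀ ℕ) (s : Multiset ℕ) (h : s.sum = c + ∑ j, v j) :
    (rdCount (c ::ₘ univ.val.map v) s : R) = coeff v (packingPoly σ R s) := by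
  classical
  have hlam : c ::ₘ univ.val.map v = univ.val.map fun o : Option σ => o.elim c v := by
    simp [univ_option, Finset.insertNone, Function.comp_def]
  have hsum : ∑ i, s.toList.get i = s.sum := congrArg Multiset.sum (map_univ_toList_get s)
  rw [hlam, rdCount_map_univ, ← map_univ_toList_get s, coeff_packingPoly_map_univ,
    map_univ_toList_get s]
  congr 1
  refine Nat.card_congr (Equiv.subtypeEquivRight fun f => ?_)
  simp only [Option.forall, Option.elim_none, Option.elim_some, and_iff_right_iff_imp]
  intro hf
  have htotal := sum_fiberwise univ f s.toList.get
  rw [Fintype.sum_option, sum_congr rfl fun j _ => hf j, hsum, h] at htotal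
  exact Nat.add_right_cancel htotal

theorem rdCount_cons_replicate {c k a : ℕ} {s : Multiset ℕ} (h : s.sum = c + a * k) :
    (rdCount (c ::ₘ Multiset.replicate a k) s : R) =
      coeff (constExponent k univ) (packingPoly (Fin a) R s) := by
  have hconst : univ.val.map (constExponent k (univ : Finset (Fin a))) =
      Multiset.replicate a k := by
    simp [constExponent_apply]
  rw [← hconst, rdCount_cons_map_univ]
  simpa [constExponent_apply] using h

end RowDecompositions

section Coefficients

variable {σ R : Type*} [CommSemiring R]

open scoped Pointwise in
theorem coeff_constExponent_congr [Finite σ] {φ : MvPolynomial σ R} (hφ : φ.IsSymmetric)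
    (k : ℕ) {S T : Finset σ} (h : #S = #T) :
    coeff (constExponent k S) φ = coeff (constExponent k T) φ := by
  classical
  have := Set.powersetCard.isPretransitive (α := σ) (n := #S)
  obtain ⟨e, he⟩ := MulAction.exists_smul_eq (Equiv.Perm σ)
    (⟨S, rfl⟩ : Set.powersetCard σ #S) ⟨T, h.symm⟩
  have hmap : (constExponent k S).mapDomain e = constExponent k T := by
    ext i
    have hT : T = e • S := congrArg Subtype.val he.symm
    simp [Finsupp.mapDomain_equiv_apply, constExponent_apply, hT, ← Finset.inv_smul_mem_iff,
      Equiv.Perm.inv_def]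
  rw [← hmap]
  conv_rhs => rw [← hφ e, coeff_rename_mapDomain _ e.injective]

theorem exists_coeff_constExponent_eq_card [Finite σ] {φ : MvPolynomial σ R} (hφ : φ.IsSymmetric)
    (k : ℕ) : ∃ c : ℕ → R, ∀ T, coeff (constExponent k T) φ = c #T := by
  have hfactors : Function.FactorsThrough (fun T => coeff (constExponent k T) φ) Finset.card :=
    fun _ _ h => coeff_constExponent_congr hφ k h
  exact ⟨_, fun T => (hfactors.extend_apply 0 T).symm⟩

variable [Fintype σ]

theorem coeff_one_add_psum_mul (n : ℕ) (v : σ →₀ ℕ) (φ : MvPolynomial σ R) :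
    coeff v ((1 + psum σ R n) * φ) =
      coeff v φ + ∑ i with n ≤ v i, coeff (v - Finsupp.single i n) φ := by
  simp [add_mul, psum, sum_mul, X_pow_eq_monomial, coeff_sum, coeff_monomial_mul', sum_filter]

theorem coeff_one_add_psum_mul_of_forall_lt {n : ℕ} {v : σ →₀ ℕ} (h : ∀ i, v i < n)
    (φ : MvPolynomial σ R) : coeff v ((1 + psum σ R n) * φ) = coeff v φ := by
  rw [coeff_one_add_psum_mul, filter_false_of_mem fun i _ => (h i).not_ge, sum_empty, add_zero]

theorem coeff_constExponent_one_add_psum_mul [DecidableEq σ] {k : ℕ} (hk : 0 < k) (T : Finset σ)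
    (φ : MvPolynomial σ R) :
    coeff (constExponent k T) ((1 + psum σ R k) * φ) =
      coeff (constExponent k T) φ + ∑ i ∈ T, coeff (constExponent k (T.erase i)) φ := by
  have hfilter : ({i | k ≤ constExponent k T i} : Finset σ) = T := by
    ext i
    by_cases hi : i ∈ T <;> simp [constExponent_apply, hi, hk.ne']
  simp only [coeff_one_add_psum_mul, hfilter, constExponent_erase]

/-- If `c a` is the number of ways to fill `a` labelled boxes, then `fillCount c q a` is the number
of ways to do so when `q` further objects, each filling a box on its own, are available: `j` is the
number of these objects that are used. -/
def fillCount (c : ℕ → R) (q a : ℕ) : R :=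
  ∑ j ∈ range (a + 1), (q.choose j * a.descFactorial j : ℕ) * c (a - j)

theorem fillCount_zero (c : ℕ → R) (a : ℕ) : fillCount c 0 a = c a := by
  simp [fillCount, sum_range_succ']

theorem fillCount_succ (c : ℕ → R) (q a : ℕ) :
    fillCount c (q + 1) a = fillCount c q a + a * fillCount c q (a - 1) := by
  cases a with
  | zero => simp [fillCount]
  | succ a =>
    simp only [fillCount, sum_range_succ' _ (a + 1), mul_sum, Nat.add_sub_cancel]
    rw [add_right_comm, ← sum_add_distrib]
    congr 1
    · refine sum_congr rfl fun j _ => ?_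
      rw [Nat.choose_succ_succ, Nat.succ_descFactorial_succ, Nat.add_sub_add_right]
      push_cast
      ring
    · simp

theorem coeff_constExponent_one_add_psum_pow_mul {k : ℕ} (hk : 0 < k) {φ : MvPolynomial σ R}
    {c : ℕ → R} (hc : ∀ T, coeff (constExponent k T) φ = c #T) (q : ℕ) (T : Finset σ) :
    coeff (constExponent k T) ((1 + psum σ R k) ^ q * φ) = fillCount c q #T := by
  classical
  induction q generalizing T with
  | zero => rw [pow_zero, one_mul, hc, fillCount_zero]
  | succ q ih =>
    have herase : ∀ i ∈ T, coeff (constExponent k (T.erase i)) ((1 + psum σ R k) ^ q * φ) =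
        fillCount c q (#T - 1) := fun i hi => by rw [ih, card_erase_of_mem hi]
    rw [pow_succ', mul_assoc, coeff_constExponent_one_add_psum_mul hk, ih, sum_congr rfl herase,
      sum_const, nsmul_eq_mul, fillCount_succ]

theorem coeff_packingPoly_add_of_forall_lt {v : σ →₀ ℕ} {s : Multiset ℕ}
    (h : ∀ x ∈ s, ∀ i, v i < x) (t : Multiset ℕ) :
    coeff v (packingPoly σ R (s + t)) = coeff v (packingPoly σ R t) := by
  induction s using Multiset.induction_on with
  | empty => rw [zero_add]
  | cons x s ih =>
    rw [Multiset.forall_mem_cons] at h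
    rw [Multiset.cons_add, packingPoly, Multiset.map_cons, Multiset.prod_cons,
      coeff_one_add_psum_mul_of_forall_lt h.1, ← packingPoly, ih h.2]

theorem packingPoly_replicate_add (k q : ℕ) (s : Multiset ℕ) :
    packingPoly σ R (Multiset.replicate q k + s) = (1 + psum σ R k) ^ q * packingPoly σ R s := by
  simp [packingPoly]

theorem isSymmetric_packingPoly (s : Multiset ℕ) : IsSymmetric (packingPoly σ R s) := by
  refine multiset_prod_mem (S := symmetricSubalgebra σ R) _ fun φ hφ => ?_
  obtain ⟨x, -, rfl⟩ := Multiset.mem_map.1 hφ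
  exact IsSymmetric.one.add (psum_isSymmetric σ R x)

theorem constantCoeff_packingPoly {s : Multiset ℕ} (h : ∀ x ∈ s, 0 < x) :
    constantCoeff (packingPoly σ R s) = 1 := by
  rw [packingPoly, map_multiset_prod, Multiset.map_map]
  refine Multiset.prod_eq_one fun a ha => ?_
  obtain ⟨x, hx, rfl⟩ := Multiset.mem_map.1 ha
  simp [psum, (h x hx).ne']

end Coefficients

section Arithmetic

theorem natCast_descFactorial_congr {R : Type*} [Ring R] {a b : ℕ} (h : (a : R) = b) (j : ℕ) :
    (a.descFactorial j : R) = b.descFactorial j := by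
  rw [← descPochhammer_eval_eq_descFactorial, h, descPochhammer_eval_eq_descFactorial]

variable {p q : ℕ}

/-- Dividing by `q` reduces this to Wilson's theorem, as `(q - 1) ⋯ (q - p + 1) ≡ (p - 1)!`. -/
theorem mul_dvd_descFactorial_add_self (hp : p.Prime) (hpq : p ∣ q) :
    p * q ∣ q.descFactorial p + q := by
  have := Fact.mk hp
  obtain _ | b := q
  · simp [hp.pos]
  obtain ⟨a, rfl⟩ := Nat.exists_eq_succ_of_ne_zero hp.ne_zero
  have hab : (b : ZMod (a + 1)) = a := by
    have hb : ((b + 1 : ℕ) : ZMod (a + 1)) = 0 := (ZMod.natCast_eq_zero_iff _ _).2 hpq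
    have ha : ((a + 1 : ℕ) : ZMod (a + 1)) = 0 := ZMod.natCast_self _
    push_cast at ha hb
    exact add_right_cancel (hb.trans ha.symm)
  have hwilson : (b.descFactorial a : ZMod (a + 1)) = -1 := by
    rw [natCast_descFactorial_congr hab, Nat.descFactorial_self]
    exact ZMod.wilsons_lemma (a + 1)
  rw [Nat.succ_descFactorial_succ, mul_comm (a + 1), ← Nat.mul_add_one]
  refine Nat.mul_dvd_mul_left _ ((ZMod.natCast_eq_zero_iff _ _).1 ?_)
  rw [Nat.cast_succ, hwilson, neg_add_cancel]

theorem choose_mul_descFactorial_comm (p q j : ℕ) :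
    q.choose j * p.descFactorial j = p.choose j * q.descFactorial j := by
  simp only [Nat.descFactorial_eq_factorial_mul_choose]
  ring

theorem dvd_descFactorial (q : ℕ) {j : ℕ} (hj : j ≠ 0) : q ∣ q.descFactorial j := by
  obtain ⟨i, rfl⟩ := Nat.exists_eq_succ_of_ne_zero hj
  cases q with
  | zero => simp
  | succ q => exact Nat.succ_descFactorial_succ q i ▸ dvd_mul_right _ _

theorem mul_dvd_fillCount_sub (hp : p.Prime) (hpq : p ∣ q) (c : ℕ → ℤ) :
    (p * q : ℤ) ∣ fillCount c q p - (c p - q * c 0) := by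
  have hmid : (p * q : ℤ) ∣
      ∑ j ∈ Ico 1 p, (q.choose j * p.descFactorial j : ℕ) * c (p - j) := by
    refine dvd_sum fun j hj => Dvd.dvd.mul_right ?_ _
    obtain ⟨hj0, hjp⟩ := mem_Ico.1 hj
    rw [choose_mul_descFactorial_comm]
    exact_mod_cast mul_dvd_mul (hp.dvd_choose_self (by omega) hjp)
      (dvd_descFactorial q (by omega))
  have htop : (p * q : ℤ) ∣ q.descFactorial p + q :=
    mod_cast mul_dvd_descFactorial_add_self hp hpq
  have hsplit : fillCount c q p - (c p - q * c 0) =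
      ∑ j ∈ Ico 1 p, (q.choose j * p.descFactorial j : ℕ) * c (p - j) +
        (q.descFactorial p + q) * c 0 := by
    rw [fillCount, sum_range_succ, range_eq_Ico, sum_eq_sum_Ico_succ_bot hp.pos,
      choose_mul_descFactorial_comm p q p]
    simp only [zero_add, Nat.choose_zero_right, Nat.descFactorial_zero, Nat.choose_self, one_mul,
      Nat.cast_one, Nat.sub_zero, Nat.sub_self]
    ring
  exact hsplit ▸ dvd_add hmid (htop.mul_right (c 0))

end Arithmetic

theorem stmt_12_general {p q k c : ℕ} (hp : p.Prime) (hpq : p ∣ q) (hk : 0 < k)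
    {ξ η : Multiset ℕ} (hξ : ∀ x ∈ ξ, 0 < x) (hη : ∀ x ∈ η, k < x) (hη_sum : η.sum = q * k)
    (hsum : ξ.sum + q * k = c + p * k) :
    (p * q : ℤ) ∣ rdCount (c ::ₘ Multiset.replicate p k) (ξ + Multiset.replicate q k) -
      (rdCount (c ::ₘ Multiset.replicate p k) (ξ + η) - q : ℤ) := by
  obtain ⟨b, hb⟩ := exists_coeff_constExponent_eq_card
    (isSymmetric_packingPoly (σ := Fin p) (R := ℤ) ξ) k
  have hb_zero : b 0 = 1 := by
    rw [← card_empty, ← hb, constExponent_empty, ← constantCoeff_eq, constantCoeff_packingPoly hξ]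
  have hμ : (rdCount (c ::ₘ Multiset.replicate p k) (ξ + Multiset.replicate q k) : ℤ) =
      fillCount b q p := by
    rw [rdCount_cons_replicate (by simpa using hsum), add_comm, packingPoly_replicate_add,
      coeff_constExponent_one_add_psum_pow_mul hk hb, card_fin]
  have hη_box : ∀ x ∈ η, ∀ i, constExponent k (univ : Finset (Fin p)) i < x := fun x hx i => by
    simpa [constExponent_apply] using hη x hx
  have hν : (rdCount (c ::ₘ Multiset.replicate p k) (ξ + η) : ℤ) = b p := by
    rw [rdCount_cons_replicate (by simpa [hη_sum] using hsum), add_comm,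
      coeff_packingPoly_add_of_forall_lt hη_box, hb, card_fin]
  simpa only [hμ, hν, hb_zero, mul_one] using mul_dvd_fillCount_sub hp hpq b

/-- Let `ξ` be a partition of `n - k·p^m`, and set
`μ = ξ ∪ (k^{p^m})`, `ν = ξ ∪ ((pk)^{p^{m-1}})`, `λ = (n - pk, k^p)`.  Then
`|RD(λ,μ)| ≡ |RD(λ,ν)| - p^m (mod p^{m+1})`. -/
theorem stmt_12 (p n k m : ℕ) (hp : p.Prime) (hk : 1 ≤ k) (hm : 1 ≤ m)
    (hn : k * p ^ m ≤ n) (hpk : p * k ≤ n)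
    (ξ : Multiset ℕ) (hξpos : ∀ a ∈ ξ, 0 < a) (hξ : ξ.sum = n - k * p ^ m) :
    ((p : ℤ)) ^ (m + 1) ∣
      (rdCount ((n - p * k) ::ₘ Multiset.replicate p k) (ξ + Multiset.replicate (p ^ m) k) : ℤ) -
      ((rdCount ((n - p * k) ::ₘ Multiset.replicate p k)
          (ξ + Multiset.replicate (p ^ (m - 1)) (p * k)) : ℤ) - (p : ℤ) ^ m) := by
  have hsum_ν : (Multiset.replicate (p ^ (m - 1)) (p * k)).sum = p ^ m * k := by
    rw [Multiset.sum_replicate, smul_eq_mul, ← mul_assoc, pow_sub_one_mul (by omega)]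
  have hlt : ∀ x ∈ Multiset.replicate (p ^ (m - 1)) (p * k), k < x := fun x hx =>
    Multiset.eq_of_mem_replicate hx ▸ lt_mul_of_one_lt_left hk hp.one_lt
  have hsum : ξ.sum + p ^ m * k = n - p * k + p * k := by
    rw [hξ, mul_comm (p ^ m), Nat.sub_add_cancel hn, Nat.sub_add_cancel hpk]
  simpa only [pow_succ', Nat.cast_pow] using
    stmt_12_general hp (dvd_pow_self p (by omega)) hk hξpos hlt hsum_ν hsum
end
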